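/- arXiv:1712.02437 — 2 statements merged into one kernel-verified Lean document; each statement's English description precedes it below -/
import Mathlib

section
/- Let $p \geq 5$ be a prime. The sum $\sum_{k \text{ QR}} e^{2\pi i k/p}$, where $k$ ranges over the quadratic residues in $\{1,\dots,p-1\}$, equals $(-1+\sqrt{p})/2$ if $p \equiv 1 \pmod 4$ and $(-1+i\sqrt{p})/2$ if $p \equiv 3 \pmod 4$. -/
open Finset Complex

/-!
The modular transformation `θ(τ) = (-iτ)^(-1/2) θ(-1/τ)` of the Jacobi theta function yields the
value of the quadratic Gauss sum, sign included. Near a rational `a / b` the function `θ` blows up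
like `(-iσ)^(-1/2) S(a, b) / b`, where `τ = a / b + σ` and `S(a, b) = ∑ k < b, exp (π i a k² / b)`:
splitting the series into residue classes modulo `b` gives two-variable theta series, to which the
functional equation applies. Letting `τ → a / b` on both sides of the transformation law expresses
`S(-b, a)` through `S(a, b)` (the Landsberg–Schaar relation); for `a = 2` the former has only two
terms. Finally, each nonzero square modulo `p` has exactly two square roots, so `S(2, p)` is one
plus twice the sum over quadratic residues.
-/

section Sqrt

lemma complexSqrt_ofReal_mul {r : ℝ} (hr : 0 ≤ r) (z : ℂ) :
    Complex.sqrt (r * z) = √r * Complex.sqrt z := by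
  rcases hr.eq_or_lt with rfl | hr
  · simp
  rcases eq_or_ne z 0 with rfl | hz
  · simp
  have hr' : (r : ℂ) ≠ 0 := ofReal_ne_zero.mpr hr.ne'
  rw [Complex.sqrt, Complex.sqrt, cpow_def_of_ne_zero (mul_ne_zero hr' hz), log_ofReal_mul hr hz,
    add_mul, Complex.exp_add, ← cpow_def_of_ne_zero hz, ofReal_log hr.le,
    ← cpow_def_of_ne_zero hr', Real.sqrt_eq_rpow, ofReal_cpow hr.le]
  norm_num

lemma complexSqrt_ofReal {r : ℝ} (hr : 0 ≤ r) : Complex.sqrt r = √r := by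
  simpa using complexSqrt_ofReal_mul hr 1

lemma continuousAt_complexSqrt {z : ℂ} (hz : z ∈ slitPlane) : ContinuousAt Complex.sqrt z :=
  continuousAt_id.cpow continuousAt_const hz

end Sqrt

section Theta

open Filter Topology Real

lemma tendsto_jacobiTheta₂_comap_im_atTop (z : ℂ) :
    Tendsto (jacobiTheta₂ z) (comap im atTop) (𝓝 1) := by
  have him : Tendsto im (comap im atTop) atTop := tendsto_comap
  have hterm (n : ℤ) :
      Tendsto (jacobiTheta₂_term n z) (comap im atTop) (𝓝 (if n = 0 then 1 else 0)) := by
    split_ifs with hn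
    · have h₀ : jacobiTheta₂_term 0 z = 1 := by
        ext τ
        simp [jacobiTheta₂_term]
      rw [hn, h₀]
      exact tendsto_const_nhds
    · rw [tendsto_zero_iff_norm_tendsto_zero]
      simp only [norm_jacobiTheta₂_term, sub_eq_add_neg]
      refine Real.tendsto_exp_atBot.comp
        (tendsto_atBot_add_const_right _ _ (him.const_mul_atTop_of_neg ?_))
      have : (0 : ℝ) < n ^ 2 := by positivity
      nlinarith [Real.pi_pos]
  have hbound : ∀ᶠ τ in comap im atTop, ∀ n : ℤ,
      ‖jacobiTheta₂_term n z τ‖ ≤ rexp (-π * (1 * n ^ 2 - 2 * |z.im| * |n|)) := by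
    filter_upwards [him.eventually_ge_atTop 1] with τ hτ
    exact norm_jacobiTheta₂_term_le one_pos le_rfl hτ
  have hsum : Summable fun n : ℤ ↦ rexp (-π * (1 * n ^ 2 - 2 * |z.im| * |n|)) := by
    simpa using summable_pow_mul_jacobiTheta₂_term_bound |z.im| one_pos 0
  have hlim := tendsto_tsum_of_dominated_convergence hsum hterm hbound
  rwa [tsum_ite_eq] at hlim

lemma hasSum_exp_sq_mul_add {N : ℕ} [NeZero N] (r : ℂ) {σ : ℂ} (hσ : 0 < σ.im) :
    HasSum (fun m : ℤ ↦ cexp (π * I * (m * N + r) ^ 2 * σ))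
      (jacobiTheta₂ (r / N) (-1 / (N ^ 2 * σ)) / (N * Complex.sqrt (-I * σ))) := by
  have hN : (N : ℂ) ≠ 0 := NeZero.ne _
  have hσ₀ : σ ≠ 0 := by
    rintro rfl
    simp at hσ
  have hNσ : 0 < ((N : ℂ) ^ 2 * σ).im := by
    have : 0 < (N : ℝ) := Nat.cast_pos.mpr (NeZero.pos N)
    rw [← ofReal_natCast, ← ofReal_pow, im_ofReal_mul]
    positivity
  have hsqrt : (-I * (N ^ 2 * σ)) ^ (1 / 2 : ℂ) = N * Complex.sqrt (-I * σ) := by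
    have := complexSqrt_ofReal_mul (sq_nonneg (N : ℝ)) (-I * σ)
    rw [Real.sqrt_sq N.cast_nonneg, Complex.sqrt, ← one_div] at this
    rw [← ofReal_natCast, ← this]
    push_cast
    ring_nf
  have hval : cexp (π * I * r ^ 2 * σ) * jacobiTheta₂ (N * r * σ) (N ^ 2 * σ) =
      jacobiTheta₂ (r / N) (-1 / (N ^ 2 * σ)) / (N * Complex.sqrt (-I * σ)) := by
    have hz : N * r * σ / (N ^ 2 * σ) = r / N := by field_simp
    have hexp : -π * I * (N * r * σ) ^ 2 / (N ^ 2 * σ) = -(π * I * r ^ 2 * σ) := by field_simp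
    rw [jacobiTheta₂_functional_equation, hsqrt, hz, hexp, Complex.exp_neg]
    field_simp
  rw [← hval]
  refine ((hasSum_jacobiTheta₂_term (N * r * σ) hNσ).mul_left _).congr_fun fun m ↦ ?_
  rw [jacobiTheta₂_term, ← Complex.exp_add]
  ring_nf

lemma eq_sum_range_of_hasSum_residueClass {M : Type*} [AddCommMonoid M] [TopologicalSpace M]
    [ContinuousAdd M] [T3Space M] {N : ℕ} [NeZero N] {f : ℤ → M} {g : ℕ → M} {s : M}
    (hf : HasSum f s) (hg : ∀ r : ℕ, HasSum (fun m : ℤ ↦ f (m * N + r)) (g r)) :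
    s = ∑ r ∈ range N, g r := by
  have hf' : HasSum (fun x : Fin N × ℤ ↦ f (x.2 * N + x.1)) s :=
    (Equiv.prodComm (Fin N) ℤ).hasSum_iff.mpr ((Int.divModEquiv N).symm.hasSum_iff.mpr hf)
  rw [← Fin.sum_univ_eq_sum_range]
  exact (hf'.prod_fiberwise fun r ↦ hg r).unique (hasSum_fintype _)

lemma sqrt_mul_jacobiTheta {τ : ℂ} (hτ : τ ≠ 0) :
    Complex.sqrt (-I * τ) * jacobiTheta τ = jacobiTheta (-1 / τ) := by
  have hsqrt : Complex.sqrt (-I * τ) ≠ 0 := by simp [Complex.sqrt, hτ]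
  rw [Complex.sqrt, ← one_div] at hsqrt ⊢
  rw [jacobiTheta_eq_jacobiTheta₂, jacobiTheta_eq_jacobiTheta₂, jacobiTheta₂_functional_equation]
  simp only [zero_div, ne_eq, OfNat.ofNat_ne_zero, not_false_eq_true, zero_pow, mul_zero,
    Complex.exp_zero, mul_one]
  rw [← mul_assoc, mul_one_div_cancel hsqrt, one_mul]

lemma ofReal_add_I_mul_ofReal_ne_zero {x : ℝ} (hx : x ≠ 0) (t : ℝ) : (x + I * t : ℂ) ≠ 0 :=
  ne_of_apply_ne re (by simpa using hx)

-- With `τ = x + i t`, the point `-1 / τ` is `-1 / x + σ` for `σ = i t / (x τ)`.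
lemma sqrt_mul_jacobiTheta_neg_one_div_add {x t : ℝ} (hx : x ≠ 0) (ht : 0 ≤ t) :
    Complex.sqrt (-I * (I * (t / (x * (x + I * t))))) *
        jacobiTheta (-1 / x + I * (t / (x * (x + I * t)))) =
      Complex.sqrt (1 / (x * (x + I * t))) * Complex.sqrt (-I * (x + I * t)) *
        (Complex.sqrt (-I * (I * t)) * jacobiTheta (x + I * t)) := by
  have hx' : (x : ℂ) ≠ 0 := ofReal_ne_zero.mpr hx
  have hτ := ofReal_add_I_mul_ofReal_ne_zero hx t
  have hcancel (z : ℂ) : -I * (I * z) = z := by linear_combination -z * I_sq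
  have hinv : (-1 / x + I * (t / (x * (x + I * t))) : ℂ) = -1 / (x + I * t) := by
    field_simp
    ring
  rw [hinv, ← sqrt_mul_jacobiTheta hτ, hcancel, hcancel, ← mul_one_div (t : ℂ),
    complexSqrt_ofReal_mul ht, complexSqrt_ofReal ht]
  ring

lemma tendsto_sqrt_one_div_mul_sqrt {x : ℝ} (hx : 0 < x) :
    Tendsto (fun t : ℝ ↦ Complex.sqrt (1 / (x * (x + I * t))) * Complex.sqrt (-I * (x + I * t)))
      (𝓝 0) (𝓝 (√x / x * Complex.sqrt (-I))) := by
  have hx' : (x : ℂ) ≠ 0 := ofReal_ne_zero.mpr hx.ne'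
  have h₁ : Tendsto (fun t : ℝ ↦ (1 / (x * (x + I * t)) : ℂ)) (𝓝 0) (𝓝 ((1 / x ^ 2 : ℝ) : ℂ)) := by
    have : ContinuousAt (fun t : ℝ ↦ (1 / (x * (x + I * t)) : ℂ)) 0 :=
      continuousAt_const.div (by fun_prop) (by simpa using hx')
    simpa [ContinuousAt, sq] using this
  have h₂ : Tendsto (fun t : ℝ ↦ -I * (x + I * t : ℂ)) (𝓝 0) (𝓝 (x * -I)) :=
    Continuous.tendsto' (by fun_prop) _ _ (by simp [mul_comm])
  have hval : (√x / x * Complex.sqrt (-I) : ℂ) =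
      Complex.sqrt (1 / x ^ 2 : ℝ) * Complex.sqrt (x * -I) := by
    rw [complexSqrt_ofReal (by positivity), complexSqrt_ofReal_mul hx.le,
      Real.sqrt_div zero_le_one, Real.sqrt_one, Real.sqrt_sq hx.le]
    push_cast
    ring
  rw [hval]
  refine ((continuousAt_complexSqrt ?_).tendsto.comp h₁).mul
    ((continuousAt_complexSqrt ?_).tendsto.comp h₂)
  · exact ofReal_mem_slitPlane.mpr (by positivity)
  · simp [mem_slitPlane_iff, hx.ne']

lemma tendsto_im_neg_one_div_I_mul_div {x : ℝ} (hx : 0 < x) :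
    Tendsto (fun t : ℝ ↦ (-1 / (I * (t / (x * (x + I * t))))).im) (𝓝[>] 0) atTop := by
  refine (tendsto_inv_nhdsGT_zero.const_mul_atTop (pow_pos hx 2)).congr' ?_
  filter_upwards [self_mem_nhdsWithin] with t (ht : 0 < t)
  have heq : (-1 / (I * (t / (x * (x + I * t)))) : ℂ) = (x ^ 2 * t⁻¹ : ℝ) * I + (-x : ℝ) := by
    have ht' : (t : ℂ) ≠ 0 := ofReal_ne_zero.mpr ht.ne'
    have hx' : (x : ℂ) ≠ 0 := ofReal_ne_zero.mpr hx.ne'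
    push_cast
    field_simp
    linear_combination (-x : ℂ) * I_sq
  rw [heq, add_im, ofReal_im, add_zero, im_ofReal_mul, I_im, mul_one]

end Theta

section GaussSum

open Filter Topology Real

/-- The quadratic exponential sum `∑ k < b, exp (π i a k² / b)`. The exponent carries `π i` and not
`2 π i`, so that reciprocity is symmetric in `a` and `b`; the summand is `b`-periodic in `k`
precisely when `a * b` is even. The classical Gauss sum modulo `p` is `quadraticGaussSum 2 p`. -/
noncomputable def quadraticGaussSum (a : ℤ) (b : ℕ) : ℂ :=
  ∑ k ∈ range b, cexp (π * I * a * k ^ 2 / b)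

lemma exp_pi_mul_I_mul_sq_div_periodic {a : ℤ} {b : ℕ} [NeZero b] (hab : Even (a * b)) (m r : ℤ) :
    cexp (π * I * a * (m * b + r) ^ 2 / b) = cexp (π * I * a * r ^ 2 / b) := by
  obtain ⟨c, hc⟩ := hab
  have hc' : (a : ℂ) * b = c + c := mod_cast hc
  have hb : (b : ℂ) ≠ 0 := NeZero.ne _
  rw [Complex.exp_eq_exp_iff_exists_int]
  refine ⟨m ^ 2 * c + a * m * r, ?_⟩
  push_cast
  field_simp
  linear_combination (m : ℂ) ^ 2 * b * hc'

lemma sqrt_mul_jacobiTheta_div_add {a : ℤ} {b : ℕ} [NeZero b] (hab : Even (a * b)) {σ : ℂ}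
    (hσ : 0 < σ.im) :
    Complex.sqrt (-I * σ) * jacobiTheta (a / b + σ) =
      (∑ k ∈ range b, cexp (π * I * a * k ^ 2 / b) *
        jacobiTheta₂ (k / b) (-1 / (b ^ 2 * σ))) / b := by
  have hτ : 0 < (a / b + σ : ℂ).im := by
    rw [← ofReal_intCast, ← ofReal_natCast, ← ofReal_div, add_im, ofReal_im, zero_add]
    exact hσ
  have hsqrt : Complex.sqrt (-I * σ) ≠ 0 := by
    have hσ₀ : σ ≠ 0 := by
      rintro rfl
      simp at hσ
    simp [Complex.sqrt, hσ₀]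
  have htheta : HasSum (fun n : ℤ ↦ cexp (π * I * n ^ 2 * (a / b + σ)))
      (jacobiTheta (a / b + σ)) := by
    simpa [jacobiTheta₂_term, ← jacobiTheta_eq_jacobiTheta₂] using hasSum_jacobiTheta₂_term 0 hτ
  have hclass (r : ℕ) : HasSum
      (fun m : ℤ ↦ cexp (π * I * ((m * b + r : ℤ) : ℂ) ^ 2 * (a / b + σ)))
      (cexp (π * I * a * r ^ 2 / b) *
        (jacobiTheta₂ (r / b) (-1 / (b ^ 2 * σ)) / (b * Complex.sqrt (-I * σ)))) := by
    refine ((hasSum_exp_sq_mul_add r hσ).mul_left _).congr_fun fun m ↦ ?_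
    have hper := exp_pi_mul_I_mul_sq_div_periodic hab m r
    push_cast at hper ⊢
    rw [← hper, ← Complex.exp_add]
    ring_nf
  rw [eq_sum_range_of_hasSum_residueClass htheta hclass, Finset.mul_sum, Finset.sum_div]
  refine Finset.sum_congr rfl fun k _ ↦ ?_
  generalize Complex.sqrt (-I * σ) = s at hsqrt
  field_simp

lemma tendsto_sqrt_mul_jacobiTheta_div_add {a : ℤ} {b : ℕ} [NeZero b] (hab : Even (a * b))
    {ι : Type*} {l : Filter ι} {σ : ι → ℂ} (hσ : Tendsto (fun t ↦ (-1 / σ t).im) l atTop) :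
    Tendsto (fun t ↦ Complex.sqrt (-I * σ t) * jacobiTheta (a / b + σ t)) l
      (𝓝 (quadraticGaussSum a b / b)) := by
  have hb : (0 : ℝ) < b := Nat.cast_pos.mpr (NeZero.pos b)
  have hcusp : Tendsto (fun t ↦ -1 / (b ^ 2 * σ t)) l (comap im atTop) := by
    rw [tendsto_comap_iff]
    refine (hσ.const_mul_atTop (inv_pos.mpr (pow_pos hb 2))).congr fun t ↦ ?_
    rw [Function.comp_apply, ← im_ofReal_mul]
    push_cast
    congr 1
    ring
  have hlim (k : ℕ) := (tendsto_jacobiTheta₂_comap_im_atTop (k / b)).comp hcusp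
  have hsum := (tendsto_finsetSum (range b) fun k _ ↦
    (hlim k).const_mul (cexp (π * I * a * k ^ 2 / b))).div_const (b : ℂ)
  simp only [mul_one] at hsum
  refine hsum.congr' ?_
  filter_upwards [hσ.eventually_gt_atTop 0] with t ht
  refine (sqrt_mul_jacobiTheta_div_add hab ?_).symm
  rw [neg_div, one_div, neg_im, inv_im, neg_div, neg_neg] at ht
  by_contra! h
  exact ht.not_ge (div_nonpos_of_nonpos_of_nonneg h (normSq_nonneg _))

lemma quadraticGaussSum_reciprocity {a b : ℕ} [NeZero a] [NeZero b] (hab : Even (a * b)) :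
    quadraticGaussSum (-b) a = √(a / b) * Complex.sqrt (-I) * quadraticGaussSum a b := by
  have ha : (a : ℂ) ≠ 0 := NeZero.ne _
  have hb : (b : ℂ) ≠ 0 := NeZero.ne _
  set x : ℝ := a / b with hx_def
  have hx : 0 < x := div_pos (Nat.cast_pos.mpr (NeZero.pos a)) (Nat.cast_pos.mpr (NeZero.pos b))
  have hx_cast : (x : ℂ) = a / b := by simp [hx_def]
  have hσ₁ : Tendsto (fun t : ℝ ↦ (-1 / (I * t)).im) (𝓝[>] 0) atTop := by
    simpa [neg_div] using tendsto_inv_nhdsGT_zero (𝕜 := ℝ)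
  have hσ₂ := tendsto_im_neg_one_div_I_mul_div hx
  have hlim₁ := tendsto_sqrt_mul_jacobiTheta_div_add (a := a) (b := b) (mod_cast hab) hσ₁
  have hlim₂ := tendsto_sqrt_mul_jacobiTheta_div_add (a := -b) (b := a)
    (by rw [neg_mul, even_neg, mul_comm]; exact_mod_cast hab) hσ₂
  have hcusp : ((-b : ℤ) / a : ℂ) = -1 / x := by
    rw [hx_cast]
    push_cast
    field_simp
  rw [Int.cast_natCast, ← hx_cast] at hlim₁
  rw [hcusp] at hlim₂
  have htransform : Tendsto _ (𝓝[>] (0 : ℝ)) _ :=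
    ((tendsto_sqrt_one_div_mul_sqrt hx).mono_left nhdsWithin_le_nhds).mul hlim₁
  have hlim := tendsto_nhds_unique hlim₂ <| htransform.congr' <| by
    filter_upwards [self_mem_nhdsWithin] with t (ht : 0 < t)
    exact (sqrt_mul_jacobiTheta_neg_one_div_add hx.ne' ht.le).symm
  rw [div_eq_iff ha] at hlim
  rw [hlim, hx_cast]
  field_simp

lemma quadraticGaussSum_two_right (a : ℤ) : quadraticGaussSum a 2 = 1 + I ^ a := by
  have harg : (π * I * a * 1 ^ 2 / 2 : ℂ) = a * (π / 2 * I) := by ring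
  have hexp : cexp (π * I * a * 1 ^ 2 / 2) = I ^ a := by
    rw [harg, Complex.exp_int_mul, Complex.exp_pi_div_two_mul_I]
  simpa [quadraticGaussSum, sum_range_succ] using hexp

lemma quadraticGaussSum_two_left (b : ℕ) [NeZero b] :
    quadraticGaussSum 2 b = √b * (1 + I) / 2 * (1 + (-I) ^ b) := by
  have hb : (√b : ℂ) ≠ 0 :=
    ofReal_ne_zero.mpr (Real.sqrt_pos.mpr (Nat.cast_pos.mpr (NeZero.pos b))).ne'
  have hsqrt_two : (√2 : ℂ) ≠ 0 := by simp
  have hI : I ^ (-b : ℤ) = (-I) ^ b := by rw [zpow_neg, zpow_natCast, ← inv_pow, inv_I]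
  have hrec := quadraticGaussSum_reciprocity (a := 2) (b := b) (even_two_mul b)
  rw [quadraticGaussSum_two_right, hI, Complex.sqrt_neg_I, Nat.cast_ofNat, Nat.cast_ofNat,
    Real.sqrt_div zero_le_two, Real.sqrt_inv] at hrec
  rw [hrec]
  push_cast
  field_simp
  linear_combination (quadraticGaussSum 2 b) * I_sq

lemma neg_I_pow_eq_pow_mod_four (n : ℕ) : (-I) ^ n = (-I) ^ (n % 4) :=
  pow_eq_pow_mod n (by rw [Even.neg_pow (by decide), I_pow_four])

lemma quadraticGaussSum_two_left_of_mod_four_eq_one {b : ℕ} (hb : b % 4 = 1) :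
    quadraticGaussSum 2 b = √b := by
  have : NeZero b := ⟨by rintro rfl; simp at hb⟩
  rw [quadraticGaussSum_two_left, neg_I_pow_eq_pow_mod_four, hb]
  linear_combination (-√b / 2 : ℂ) * I_sq

lemma quadraticGaussSum_two_left_of_mod_four_eq_three {b : ℕ} (hb : b % 4 = 3) :
    quadraticGaussSum 2 b = I * √b := by
  have : NeZero b := ⟨by rintro rfl; simp at hb⟩
  rw [quadraticGaussSum_two_left, neg_I_pow_eq_pow_mod_four, hb]
  linear_combination (√b / 2 * (1 - I - I ^ 2) : ℂ) * I_sq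

end GaussSum

section QuadraticResidues

lemma sum_comp_sq {F M : Type*} [Field F] [Fintype F] [DecidableEq F] [AddCommMonoid M]
    (hF : ringChar F ≠ 2) (f : F → M) :
    ∑ x, f (x ^ 2) = f 0 + 2 • ∑ y with quadraticChar F y = 1, f y := by
  have hcard (y : F) : #{x : F | x ^ 2 = y} =
      (if y = 0 then 1 else 0) + 2 * if quadraticChar F y = 1 then 1 else 0 := by
    have h := quadraticChar_card_sqrts hF y
    rw [Set.toFinset_ofPred] at h
    rcases eq_or_ne y 0 with rfl | hy
    · simpa using h
    · rcases quadraticChar_dichotomy hy with hχ | hχ <;> simp [hχ, hy] at h ⊢ <;> omega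
  calc ∑ x, f (x ^ 2) = ∑ y, #{x : F | x ^ 2 = y} • f y := by
        rw [← sum_fiberwise univ (fun x : F ↦ x ^ 2)]
        refine sum_congr rfl fun y _ ↦ ?_
        rw [← sum_const]
        exact sum_congr rfl fun x hx ↦ by rw [(mem_filter.mp hx).2]
    _ = f 0 + 2 • ∑ y with quadraticChar F y = 1, f y := by
        simp only [hcard, add_smul, mul_smul, ite_smul, one_smul, zero_smul, sum_add_distrib,
          sum_ite_eq', mem_univ, if_true, ← smul_sum, sum_filter]

lemma sum_range_natCast_zmod {M : Type*} [AddCommMonoid M] (N : ℕ) [NeZero N] (f : ZMod N → M) :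
    ∑ k ∈ range N, f k = ∑ x, f x := by
  refine sum_bij' (fun k _ ↦ (k : ZMod N)) (fun x _ ↦ x.val) ?_ ?_ ?_ ?_ ?_ <;>
  simp +contextual [ZMod.val_lt, Nat.mod_eq_of_lt]

lemma stdAddChar_natCast {N : ℕ} [NeZero N] (k : ℕ) :
    ZMod.stdAddChar (k : ZMod N) = cexp (2 * Real.pi * I * k / N) := by
  simpa using ZMod.stdAddChar_coe (N := N) k

lemma quadraticGaussSum_two_left_eq_sum_legendreSym {p : ℕ} [Fact p.Prime] (hp : p ≠ 2) :
    quadraticGaussSum 2 p =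
      1 + 2 * ∑ k ∈ range p with legendreSym p (k : ℕ) = 1, cexp (2 * Real.pi * I * k / p) := by
  have hF : ringChar (ZMod p) ≠ 2 := (ZMod.ringChar_zmod_n p).substr hp
  have hsq : quadraticGaussSum 2 p = ∑ x : ZMod p, ZMod.stdAddChar (x ^ 2) := by
    rw [← sum_range_natCast_zmod, quadraticGaussSum]
    refine sum_congr rfl fun k _ ↦ ?_
    rw [← Nat.cast_pow (α := ZMod p), stdAddChar_natCast]
    push_cast
    ring_nf
  have hres : ∑ x : ZMod p with quadraticChar (ZMod p) x = 1, ZMod.stdAddChar x =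
      ∑ k ∈ range p with legendreSym p (k : ℕ) = 1, cexp (2 * Real.pi * I * k / p) := by
    rw [sum_filter, ← sum_range_natCast_zmod, sum_filter]
    simp only [stdAddChar_natCast, legendreSym, Int.cast_natCast]
  rw [hsq, sum_comp_sq hF, hres, AddChar.map_zero_eq_one, nsmul_eq_mul, Nat.cast_ofNat]

end QuadraticResidues

theorem stmt_3_general (p : ℕ) [Fact p.Prime] (hp : p ≠ 2) :
    (∑ k ∈ (Finset.range p).filter (fun k : ℕ => legendreSym p (k : ℤ) = 1),
        Complex.exp (2 * Real.pi * Complex.I * k / p))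
      = if p % 4 = 1 then ((-1 + Real.sqrt p) / 2 : ℂ)
        else (-1 + Complex.I * Real.sqrt p) / 2 := by
  have hsum := quadraticGaussSum_two_left_eq_sum_legendreSym hp
  split_ifs with hmod
  · rw [quadraticGaussSum_two_left_of_mod_four_eq_one hmod] at hsum
    linear_combination (-1 / 2) * hsum
  · have hodd := (Fact.out : p.Prime).eq_two_or_odd.resolve_left hp
    rw [quadraticGaussSum_two_left_of_mod_four_eq_three (by omega)] at hsum
    linear_combination (-1 / 2) * hsum

theorem stmt_3 (p : ℕ) [Fact p.Prime] (hp5 : 5 ≤ p) :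
    (∑ k ∈ (Finset.range p).filter (fun k : ℕ => legendreSym p (k : ℤ) = 1),
        Complex.exp (2 * Real.pi * Complex.I * k / p))
      = if p % 4 = 1 then ((-1 + Real.sqrt p) / 2 : ℂ)
        else (-1 + Complex.I * Real.sqrt p) / 2 :=
  stmt_3_general p (by omega)
end

section
/- Let $p \geq 5$ be a prime with $p \equiv 3 \pmod 4$, and let $h(p)$ denote the class number of $\mathbb{Q}(\sqrt{-p})$. Then $\sum_{k,\ (k/p)_L=1} \frac{k}{p} = \frac{p-1}{4} - \frac{h(p)}{2}$ and $\sum_{k,\ (k/p)_L=-1} \frac{k}{p} = \frac{p-1}{4} + \frac{h(p)}{2}$, where the sums range over $k \in \{1,\dots,p-1\}$ that are quadratic residues (resp. non-residues) mod $p$. -/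
open Finset

/-!
Counting ideals of prime power norm gives `ζ_K(s) = ζ(s) L(s, χ)` for `K = ℚ(√-p)` and `χ` the
Legendre character, so the residue formula for `ζ_K` yields `L(1, χ) = π h / √p`. On the other hand
`L(1, χ)` is a finite combination of the values `π cot(π k / p)`, and the discrete Fourier transform
turns it into `-(π / √p) (1 / p) ∑ (k / p) k`, provided the quadratic Gauss sum is `+i √p`.
Since the residues and nonresidues together sum to `p (p - 1) / 2`, the theorem follows.

The sign of the Gauss sum `g` is found by Kronecker's method: `g` and the explicitly known product
`P = ∏ k ∈ [1, (p - 1) / 2], (ζ ^ k - ζ ^ (-k))` have the same square, so `g = ±P`, and comparing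
the leading terms of both in powers of `1 - ζ` identifies the sign as `(-2 / p)`.
-/

namespace ImaginaryQuadratic

section GaussSumSign

open Polynomial

lemma sub_one_pow_eq_geom_sum (p : ℕ) [Fact p.Prime] (R : Type*) [CommRing R] [CharP R p] :
    (X - 1 : R[X]) ^ (p - 1) = ∑ j ∈ range p, X ^ j := by
  apply (monic_X_sub_C (1 : R)).isRegular.right
  simp only [map_one]
  rw [geom_sum_mul, ← pow_succ, Nat.sub_add_cancel (Fact.out : p.Prime).one_le, sub_pow_char,
    one_pow]

lemma X_mul_derivative_sum_C_mul_X_pow {R : Type*} [CommRing R] (c : ℕ → R) (s : Finset ℕ) :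
    X * derivative (∑ j ∈ s, C (c j) * X ^ j) = ∑ j ∈ s, C (c j * j) * X ^ j := by
  rw [derivative_sum, mul_sum]
  refine sum_congr rfl fun j _ ↦ ?_
  rcases j with _ | j
  · simp
  · rw [derivative_C_mul_X_pow, Nat.add_sub_cancel, pow_succ]
    ring

-- Induction on `m`: the operator `X * d/dX` multiplies the `j`-th coefficient by `j` and lowers
-- the order of vanishing at `1` by one.
lemma exists_sum_pow_mul_X_pow_eq (p : ℕ) [Fact p.Prime] (R : Type*) [CommRing R] [CharP R p]
    {m : ℕ} (hm : m < p) :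
    ∃ U : R[X], ∑ j ∈ range p, C ((j : R) ^ m) * X ^ j = (X - 1) ^ (p - 1 - m) * U ∧
      U.eval 1 = (-1) ^ m * (m.factorial : R) := by
  induction m with
  | zero => exact ⟨1, by simp [sub_one_pow_eq_geom_sum], by simp⟩
  | succ m ih =>
    obtain ⟨U, hU, hU_one⟩ := ih (by omega)
    obtain ⟨r, hr⟩ : ∃ r, p = r + m + 2 := ⟨p - (m + 2), by omega⟩
    rw [show p - 1 - m = r + 1 by omega] at hU
    rw [show p - 1 - (m + 1) = r by omega]
    refine ⟨X * ((r + 1 : R[X]) * U + (X - 1) * derivative U), ?_, ?_⟩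
    · simp only [pow_succ _ m]
      rw [← X_mul_derivative_sum_C_mul_X_pow, hU, derivative_mul, derivative_pow]
      simp only [derivative_sub, derivative_X, derivative_one, Nat.cast_add, Nat.cast_one, map_add,
        map_natCast, map_one, Nat.add_sub_cancel]
      ring
    · have hr_cast : (r : R) + m + 2 = 0 := by
        rw [← CharP.cast_eq_zero R p, hr]
        push_cast
        rfl
      simp only [eval_mul, eval_X, eval_add, eval_natCast, eval_one, eval_sub, hU_one,
        Nat.factorial_succ, Nat.cast_mul, Nat.cast_add, Nat.cast_one]
      linear_combination (-1) ^ m * (m.factorial : R) * hr_cast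

lemma exists_prod_X_pow_sub_X_pow_eq {R ι : Type*} [CommRing R] (s : Finset ι) (a b : ι → ℕ) :
    ∃ V : R[X], ∏ k ∈ s, (X ^ a k - X ^ b k) = (X - 1) ^ #s * V ∧
      V.eval 1 = ∏ k ∈ s, ((a k : R) - b k) := by
  refine ⟨∏ k ∈ s, (∑ i ∈ range (a k), X ^ i - ∑ i ∈ range (b k), X ^ i), ?_, ?_⟩
  · rw [← prod_const, ← prod_mul_distrib]
    refine prod_congr rfl fun k _ ↦ ?_
    rw [mul_sub, mul_geom_sum, mul_geom_sum]
    ring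
  · simp [eval_prod, eval_finsetSum]

lemma sub_one_pow_dvd_map_of_aeval_eq_zero {p : ℕ} [Fact p.Prime] {ζ : ℂ}
    (hζ : IsPrimitiveRoot ζ p) {F : ℤ[X]} (hF : aeval ζ F = 0) :
    (X - 1) ^ (p - 1) ∣ F.map (Int.castRingHom (ZMod p)) := by
  have hp : 0 < p := (Fact.out : p.Prime).pos
  have hdvd : cyclotomic p ℤ ∣ F := by
    rw [cyclotomic_eq_minpoly hζ hp]
    exact minpoly.isIntegrallyClosed_dvd (hζ.isIntegral hp) hF
  simpa [cyclotomic_prime, sub_one_pow_eq_geom_sum] using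
    map_dvd (mapRingHom (Int.castRingHom (ZMod p))) hdvd

lemma eval_one_eq_of_sub_one_pow_dvd {R : Type*} [CommRing R] {m n : ℕ} (hmn : m < n) {U V : R[X]}
    (h : (X - 1) ^ n ∣ (X - 1) ^ m * U - (X - 1) ^ m * V) : U.eval 1 = V.eval 1 := by
  have hreg : IsRegular ((X - 1 : R[X]) ^ m) := by
    simpa using ((monic_X_sub_C (1 : R)).pow m).isRegular
  obtain ⟨W, hW⟩ := h
  have hUV : U - V = (X - 1) ^ (n - m) * W := hreg.left <| by
    simp only
    rw [mul_sub, hW, ← mul_assoc, ← pow_add, Nat.add_sub_cancel' hmn.le]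
  have := congrArg (eval 1) hUV
  rwa [eval_sub, eval_mul, eval_pow, eval_sub, eval_X, eval_one, sub_self,
    zero_pow (Nat.sub_ne_zero_of_lt hmn), zero_mul, sub_eq_zero] at this

lemma prod_natCast_sub_eq {n p : ℕ} (hn : n ≤ p) :
    ∏ k ∈ range n, (((k + 1 : ℕ) : ZMod p) - (p - (k + 1) : ℕ)) = 2 ^ n * n.factorial := by
  rw [← prod_range_add_one_eq_factorial, Nat.cast_prod]
  conv_rhs => rw [← card_range n, ← prod_const, card_range, ← prod_mul_distrib]
  refine prod_congr rfl fun k hk ↦ ?_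
  rw [mem_range] at hk
  rw [Nat.cast_sub (by omega), CharP.cast_eq_zero (ZMod p) p]
  push_cast
  ring

variable {p : ℕ} [Fact p.Prime]

lemma factorial_ne_zero_of_lt {n : ℕ} (hn : n < p) : (n.factorial : ZMod p) ≠ 0 := by
  rw [Ne, ZMod.natCast_eq_zero_iff, (Fact.out : p.Prime).dvd_factorial]
  exact hn.not_ge

-- Kronecker's determination of the sign: modulo `p`, which is `(1 - ζ) ^ (p - 1)` up to a unit,
-- both sides become polynomials modulo `(X - 1) ^ (p - 1)` over `ZMod p`, and their leading terms
-- are compared.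
lemma neg_one_pow_eq_mul_two_pow (hp : p ≠ 2) {ζ : ℂ} (hζ : IsPrimitiveRoot ζ p) {δ : ℤ}
    (h : ∑ j ∈ range p, (legendreSym p j : ℂ) * ζ ^ j =
      δ * ∏ k ∈ range (p / 2), (ζ ^ (k + 1) - ζ ^ (p - (k + 1)))) :
    (-1) ^ (p / 2) = (δ : ZMod p) * 2 ^ (p / 2) := by
  have hodd : p % 2 = 1 := (Fact.out : p.Prime).eq_two_or_odd.resolve_left hp
  have hp2 : 2 ≤ p := (Fact.out : p.Prime).two_le
  obtain ⟨U, hU, hU_one⟩ := exists_sum_pow_mul_X_pow_eq p (ZMod p) (m := p / 2) (by omega)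
  obtain ⟨V, hV, hV_one⟩ := exists_prod_X_pow_sub_X_pow_eq (R := ZMod p) (range (p / 2))
    (fun k ↦ k + 1) (fun k ↦ p - (k + 1))
  rw [show p - 1 - p / 2 = p / 2 by omega] at hU
  rw [card_range] at hV
  rw [prod_natCast_sub_eq (Nat.div_le_self p 2)] at hV_one
  let F : ℤ[X] := ∑ j ∈ range p, C (legendreSym p j) * X ^ j -
    C δ * ∏ k ∈ range (p / 2), (X ^ (k + 1) - X ^ (p - (k + 1)))
  have hF_root : aeval ζ F = 0 := by
    simp [F, ← h]
  have hcoeff (j : ℕ) : (legendreSym p j : (ZMod p)[X]) = j ^ (p / 2) := by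
    simpa using congrArg C (legendreSym.eq_pow p j)
  have hF_map : F.map (Int.castRingHom (ZMod p)) =
      (X - 1) ^ (p / 2) * U - (X - 1) ^ (p / 2) * (C (δ : ZMod p) * V) := by
    rw [← hU, mul_left_comm, ← hV]
    simp [F, Polynomial.map_sum, Polynomial.map_prod, hcoeff]
  have hdvd := sub_one_pow_dvd_map_of_aeval_eq_zero hζ hF_root
  rw [hF_map] at hdvd
  have heval := eval_one_eq_of_sub_one_pow_dvd (by omega) hdvd
  rw [hU_one, eval_mul, eval_C, hV_one, ← mul_assoc] at heval
  exact mul_right_cancel₀ (factorial_ne_zero_of_lt (by omega)) heval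

end GaussSumSign

section GaussSum

lemma prod_range_two_mul {M : Type*} [CommMonoid M] (n : ℕ) (f : ℕ → M) :
    ∏ k ∈ range (2 * n), f k = ∏ k ∈ range n, (f k * f (2 * n - 1 - k)) := by
  rw [two_mul, prod_range_add, ← prod_range_reflect (fun k ↦ f (n + k)), ← prod_mul_distrib]
  refine prod_congr rfl fun k hk ↦ ?_
  rw [mem_range] at hk
  rw [show n + (n - 1 - k) = n + n - 1 - k by omega]

lemma sq_prod_pow_sub_pow {R : Type*} [CommRing R] [IsDomain R] {n : ℕ} {ζ : R}
    (h : IsPrimitiveRoot ζ (2 * n + 1)) :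
    (∏ k ∈ range n, (ζ ^ (k + 1) - ζ ^ (2 * n + 1 - (k + 1)))) ^ 2 =
      (-1) ^ n * ((2 * n + 1 : ℕ) : R) := by
  have hprod := (h.pow_of_coprime 2 (by simp)).prod_one_sub_pow_eq_order
  rw [prod_range_two_mul] at hprod
  rw [Nat.cast_add_one, ← hprod, ← prod_pow, ← card_range n, ← prod_const, card_range,
    ← prod_mul_distrib]
  refine prod_congr rfl fun k hk ↦ ?_
  rw [mem_range] at hk
  have hinv : ζ ^ (k + 1) * ζ ^ (2 * n + 1 - (k + 1)) = 1 := by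
    rw [← pow_add, Nat.add_sub_cancel' (by omega), h.pow_eq_one]
  rw [show 2 * n - 1 - k + 1 = 2 * n + 1 - (k + 1) by omega, pow_right_comm, pow_right_comm ζ 2]
  linear_combination (-1 + ζ ^ (k + 1) * ζ ^ (2 * n + 1 - (k + 1))) * hinv

lemma exp_pow_sub_exp_pow {N k : ℕ} (hk : k ≤ N) (hN : N ≠ 0) :
    Complex.exp (2 * Real.pi * Complex.I / N) ^ k -
      Complex.exp (2 * Real.pi * Complex.I / N) ^ (N - k) =
      Complex.I * (2 * Real.sin (2 * Real.pi * k / N) : ℝ) := by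
  have hN' : (N : ℂ) ≠ 0 := Nat.cast_ne_zero.2 hN
  have hneg : Complex.exp (2 * Real.pi * Complex.I / N) ^ (N - k) =
      Complex.exp (-(2 * Real.pi * k / N) * Complex.I) := by
    rw [← Complex.exp_nat_mul, Nat.cast_sub hk, ← Complex.exp_periodic.sub_eq]
    congr 1
    field_simp
    ring
  rw [hneg, ← Complex.exp_nat_mul, show k * (2 * Real.pi * Complex.I / N) =
    2 * Real.pi * k / N * Complex.I by ring]
  push_cast
  rw [Complex.two_sin]
  linear_combination (Complex.exp (-(2 * Real.pi * k / N) * Complex.I) -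
    Complex.exp (2 * Real.pi * k / N * Complex.I)) * -Complex.I_sq

lemma prod_exp_pow_sub_exp_pow (n : ℕ) :
    ∏ k ∈ range n, (Complex.exp (2 * Real.pi * Complex.I / (2 * n + 1 : ℕ)) ^ (k + 1) -
      Complex.exp (2 * Real.pi * Complex.I / (2 * n + 1 : ℕ)) ^ (2 * n + 1 - (k + 1))) =
      Complex.I ^ n * (√(2 * n + 1 : ℕ) : ℝ) := by
  set r : ℝ := ∏ k ∈ range n, 2 * Real.sin (2 * Real.pi * (k + 1 : ℕ) / (2 * n + 1 : ℕ)) with hr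
  have hr_nonneg : 0 ≤ r := by
    refine prod_nonneg fun k hk ↦ ?_
    have hk' : ((2 * (k + 1) : ℕ) : ℝ) ≤ (2 * n + 1 : ℕ) := by
      rw [mem_range] at hk
      exact_mod_cast (by omega : 2 * (k + 1) ≤ 2 * n + 1)
    refine mul_nonneg zero_le_two (Real.sin_nonneg_of_nonneg_of_le_pi (by positivity) ?_)
    rw [div_le_iff₀ (by positivity)]
    push_cast at hk' ⊢
    nlinarith [Real.pi_pos]
  have hprod : ∏ k ∈ range n, (Complex.exp (2 * Real.pi * Complex.I / (2 * n + 1 : ℕ)) ^ (k + 1) -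
      Complex.exp (2 * Real.pi * Complex.I / (2 * n + 1 : ℕ)) ^ (2 * n + 1 - (k + 1))) =
      Complex.I ^ n * r := by
    rw [hr, Complex.ofReal_prod, ← card_range n, ← prod_const, card_range, ← prod_mul_distrib]
    refine prod_congr rfl fun k hk ↦ exp_pow_sub_exp_pow ?_ (by omega)
    rw [mem_range] at hk
    omega
  have hsq := sq_prod_pow_sub_pow (Complex.isPrimitiveRoot_exp (2 * n + 1) (by omega))
  rw [hprod, mul_pow, pow_right_comm, Complex.I_sq] at hsq
  have hr_sq : r ^ 2 = (2 * n + 1 : ℕ) := by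
    exact_mod_cast mul_left_cancel₀ (pow_ne_zero n (neg_ne_zero.2 one_ne_zero)) hsq
  rw [hprod, ← hr_sq, Real.sqrt_sq hr_nonneg]

lemma sum_zmod_eq_sum_range {M : Type*} [AddCommMonoid M] {N : ℕ} [NeZero N] (f : ZMod N → M) :
    ∑ j, f j = ∑ k ∈ range N, f k :=
  sum_nbij' ZMod.val Nat.cast (by simp [ZMod.val_lt]) (by simp) (by simp)
    (fun k hk ↦ ZMod.val_cast_of_lt (mem_range.1 hk)) (by simp)

/-- The Legendre symbol `(· / p)` as a complex Dirichlet character. -/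
noncomputable def legendreChar (p : ℕ) [Fact p.Prime] : DirichletCharacter ℂ p :=
  (quadraticChar (ZMod p)).ringHomComp (Int.castRingHom ℂ)

variable {p : ℕ} [Fact p.Prime]

lemma legendreChar_intCast (a : ℤ) : legendreChar p a = legendreSym p a := by
  simp [legendreChar, legendreSym]

lemma legendreChar_natCast (a : ℕ) : legendreChar p a = legendreSym p a := by
  simpa using legendreChar_intCast (p := p) a

lemma isQuadratic_legendreChar : (legendreChar p).IsQuadratic :=
  (quadraticChar_isQuadratic (ZMod p)).comp _

lemma legendreChar_ne_one (hp : p ≠ 2) : legendreChar p ≠ 1 := by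
  rw [legendreChar, Ne, MulChar.ringHomComp_eq_one_iff (RingHom.injective_int _)]
  exact quadraticChar_ne_one (by rwa [ZMod.ringChar_zmod_n])

lemma gaussSum_legendreChar_eq_sum :
    gaussSum (legendreChar p) (ZMod.stdAddChar (N := p)) =
      ∑ j ∈ range p, (legendreSym p j : ℂ) * Complex.exp (2 * Real.pi * Complex.I / p) ^ j := by
  rw [gaussSum, sum_zmod_eq_sum_range]
  refine sum_congr rfl fun j _ ↦ ?_
  rw [legendreChar_natCast, ← Complex.exp_nat_mul, ← Int.cast_natCast (R := ZMod p),
    ZMod.stdAddChar_coe]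
  congr 2
  push_cast
  ring

lemma legendreChar_neg_one (hp : p ≠ 2) : legendreChar p (-1) = (-1) ^ (p / 2) := by
  have h := legendreChar_intCast (p := p) (-1)
  have hodd : p % 2 = 1 := (Fact.out : p.Prime).eq_two_or_odd.resolve_left hp
  rw [legendreSym.at_neg_one hp, ZMod.χ₄_eq_neg_one_pow hodd] at h
  simpa using h

lemma eq_of_intCast_zmod_eq (hp : p ≠ 2) {a b : ℤ} (ha : a = 1 ∨ a = -1) (hb : b = 1 ∨ b = -1)
    (h : (a : ZMod p) = b) : a = b := by
  have : Fact (2 < p) := ⟨(Fact.out : p.Prime).two_le.lt_of_ne' hp⟩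
  have hne := ZMod.neg_one_ne_one (n := p)
  rcases ha with rfl | rfl <;> rcases hb with rfl | rfl <;> simp_all [eq_comm]

lemma gaussSum_legendreChar_eq_prod (hp : p ≠ 2) :
    gaussSum (legendreChar p) (ZMod.stdAddChar (N := p)) =
      legendreSym p (-2) * (Complex.I ^ (p / 2) * (√p : ℝ)) := by
  obtain ⟨n, hn⟩ : ∃ n, p = 2 * n + 1 := (Fact.out : p.Prime).odd_of_ne_two hp
  have hprod := prod_exp_pow_sub_exp_pow n
  rw [← hn, show n = p / 2 by omega] at hprod
  have hsq : gaussSum (legendreChar p) (ZMod.stdAddChar (N := p)) ^ 2 =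
      (Complex.I ^ (p / 2) * (√p : ℝ)) ^ 2 := by
    rw [gaussSum_sq (χ := legendreChar p) (legendreChar_ne_one hp) isQuadratic_legendreChar
      (ZMod.isPrimitive_stdAddChar p), legendreChar_neg_one hp, mul_pow, pow_right_comm,
      Complex.I_sq, ← Complex.ofReal_pow, Real.sq_sqrt p.cast_nonneg, ZMod.card,
      Complex.ofReal_natCast]
  obtain ⟨δ, hδ, hsum⟩ : ∃ δ : ℤ, (δ = 1 ∨ δ = -1) ∧
      gaussSum (legendreChar p) (ZMod.stdAddChar (N := p)) =
        δ * (Complex.I ^ (p / 2) * (√p : ℝ)) := by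
    rcases sq_eq_sq_iff_eq_or_eq_neg.1 hsq with h | h
    · exact ⟨1, .inl rfl, by simpa using h⟩
    · exact ⟨-1, .inr rfl, by simpa using h⟩
  have hsign : (-1) ^ (p / 2) = (δ : ZMod p) * 2 ^ (p / 2) := by
    refine neg_one_pow_eq_mul_two_pow hp
      (Complex.isPrimitiveRoot_exp p (Fact.out : p.Prime).ne_zero) ?_
    rw [← gaussSum_legendreChar_eq_sum, hprod, hsum]
  have htwo : (2 : ZMod p) ≠ 0 := by
    simpa using (ZMod.natCast_eq_zero_iff 2 p).not.2 fun h ↦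
      hp ((Nat.prime_dvd_prime_iff_eq Fact.out Nat.prime_two).1 h)
  have hδ_eq : (δ : ZMod p) = legendreSym p (-2) := by
    rw [legendreSym.eq_pow, Int.cast_neg, Int.cast_ofNat, neg_pow, hsign, mul_assoc, ← pow_add,
      show p / 2 + p / 2 = p - 1 by omega, ZMod.pow_card_sub_one_eq_one htwo, mul_one]
  rw [hsum, eq_of_intCast_zmod_eq hp hδ (legendreSym.eq_one_or_neg_one p (by simpa using htwo))
    hδ_eq]

theorem gaussSum_legendreChar (hp : p ≠ 2) :
    gaussSum (legendreChar p) (ZMod.stdAddChar (N := p)) =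
      (if p % 4 = 1 then 1 else Complex.I) * (√p : ℝ) := by
  rw [gaussSum_legendreChar_eq_prod hp, ← mul_assoc]
  congr 1
  have hodd : p % 2 = 1 := (Fact.out : p.Prime).eq_two_or_odd.resolve_left hp
  rw [legendreSym.at_neg_two hp, ZMod.χ₈'_nat_eq_if_mod_eight, Complex.I_pow_eq_pow_mod]
  rcases (by omega : p % 8 = 1 ∨ p % 8 = 3 ∨ p % 8 = 5 ∨ p % 8 = 7) with h | h | h | h
  · simp [h, hodd, show p / 2 % 4 = 0 by omega, show p % 4 = 1 by omega]
  · simp [h, hodd, show p / 2 % 4 = 1 by omega, show p % 4 = 3 by omega]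
  · simp [h, hodd, show p / 2 % 4 = 2 by omega, show p % 4 = 1 by omega]
  · simp [h, hodd, show p / 2 % 4 = 3 by omega, show p % 4 = 3 by omega, pow_succ]

end GaussSum

section HurwitzZetaOddOne

open Filter Topology

lemma abs_rpow_neg_sub_rpow_neg_le {m x y s : ℝ} (hm : 0 < m) (hx : m ≤ x) (hy : m ≤ y)
    (hs : 0 ≤ s) : |x ^ (-s) - y ^ (-s)| ≤ s * m ^ (-s - 1) * |x - y| := by
  refine (convex_Ici m).norm_image_sub_le_of_norm_hasDerivWithin_le
    (f := fun t : ℝ ↦ t ^ (-s)) (f' := fun t ↦ -s * t ^ (-s - 1)) (fun t ht ↦ ?_)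
    (fun t ht ↦ ?_) hy hx
  · exact (Real.hasDerivAt_rpow_const (.inl (hm.trans_le ht).ne')).hasDerivWithinAt
  · rw [norm_mul, norm_neg, Real.norm_of_nonneg hs,
      Real.norm_of_nonneg (Real.rpow_nonneg (hm.le.trans ht) _)]
    exact mul_le_mul_of_nonneg_left (Real.rpow_le_rpow_of_nonpos hm ht (by linarith)) hs

lemma abs_hurwitzOddTerm_le {a s : ℝ} (ha : 0 < a) (ha' : a < 1) (hs : s ∈ Set.Icc 1 2) (n : ℕ) :
    |(n + a) ^ (-s) - (n + 1 - a) ^ (-s)| ≤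
      2 * min a (1 - a) ^ (-3 : ℝ) * (1 / ((n : ℝ) + 1) ^ 2) := by
  obtain ⟨hs_ge, hs_le⟩ := hs
  set c := min a (1 - a)
  have hc : 0 < c := lt_min ha (by linarith)
  have hca : c ≤ a := min_le_left _ _
  have hca' : c ≤ 1 - a := min_le_right _ _
  have hcn : c * (n + 1) ≤ n + c := by nlinarith
  have hdiff : |(n : ℝ) + a - (n + 1 - a)| ≤ 1 := by
    rw [abs_le]
    constructor <;> linarith
  calc |(n + a) ^ (-s) - (n + 1 - a) ^ (-s)|
      ≤ s * (c * (n + 1)) ^ (-s - 1) * |(n : ℝ) + a - (n + 1 - a)| :=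
        abs_rpow_neg_sub_rpow_neg_le (by positivity) (by linarith) (by linarith) (by linarith)
    _ ≤ 2 * (c ^ (-s - 1) * (n + 1 : ℝ) ^ (-s - 1)) * 1 := by
        rw [Real.mul_rpow hc.le (by positivity)]
        gcongr
    _ ≤ 2 * (c ^ (-3 : ℝ) * (n + 1 : ℝ) ^ (-2 : ℝ)) * 1 := by
        gcongr 2 * (?_ * ?_) * 1
        · exact Real.rpow_le_rpow_of_exponent_ge hc (by linarith) (by linarith)
        · exact Real.rpow_le_rpow_of_exponent_le (by linarith) (by linarith)
    _ = 2 * c ^ (-3 : ℝ) * (1 / ((n : ℝ) + 1) ^ 2) := by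
        rw [Real.rpow_neg (by positivity) 2, Real.rpow_two]
        ring

lemma summable_const_mul_one_div_add_one_sq (c : ℝ) :
    Summable fun n : ℕ ↦ c * (1 / ((n : ℝ) + 1) ^ 2) := by
  simpa using ((summable_nat_add_iff 1).2
    (Real.summable_one_div_nat_pow.2 one_lt_two)).mul_left c

lemma sum_range_inv_sub_inv_eq_sum_cotTerm (a : ℝ) (N : ℕ) :
    ((∑ n ∈ range N, ((n + a)⁻¹ - (n + 1 - a)⁻¹) : ℝ) : ℂ) =
      ∑ j ∈ range N, cotTerm a j + ((a⁻¹ - (a + N)⁻¹ : ℝ) : ℂ) := by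
  induction N with
  | zero => simp
  | succ N ih =>
    have hneg : (1 : ℂ) / (a - (N + 1)) = -(N + 1 - a : ℂ)⁻¹ := by
      rw [← inv_neg, one_div, neg_sub]
    rw [sum_range_succ, sum_range_succ, Complex.ofReal_add, ih, cotTerm, hneg]
    push_cast
    ring

lemma ofReal_mem_integerComplement {a : ℝ} (ha : 0 < a) (ha' : a < 1) :
    (a : ℂ) ∈ Complex.integerComplement := by
  rintro ⟨n, hn⟩
  have hn' : (n : ℝ) = a := by exact_mod_cast hn
  have h₀ : 0 < n := by exact_mod_cast hn' ▸ ha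
  have h₁ : n < 1 := by exact_mod_cast hn' ▸ ha'
  omega

lemma tsum_inv_sub_inv_eq_cot {a : ℝ} (ha : 0 < a) (ha' : a < 1) :
    ((∑' n : ℕ, ((n + a) ^ (-1 : ℝ) - (n + 1 - a) ^ (-1 : ℝ)) : ℝ) : ℂ) =
      Real.pi * Complex.cot (Real.pi * a) := by
  have hsum : Summable fun n : ℕ ↦ (n + a) ^ (-1 : ℝ) - (n + 1 - a) ^ (-1 : ℝ) :=
    .of_norm_bounded (summable_const_mul_one_div_add_one_sq _)
      (abs_hurwitzOddTerm_le ha ha' ⟨le_rfl, one_le_two⟩)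
  have hcot := tendsto_logDeriv_euler_cot_sub (ofReal_mem_integerComplement ha ha')
  have htail : Tendsto (fun N : ℕ ↦ a⁻¹ - (a + N)⁻¹) atTop (𝓝 (a⁻¹ - 0)) :=
    tendsto_const_nhds.sub
      (tendsto_atTop_add_const_left _ _ tendsto_natCast_atTop_atTop).inv_tendsto_atTop
  have hpartial := (Complex.continuous_ofReal.tendsto _).comp hsum.hasSum.tendsto_sum_nat
  refine tendsto_nhds_unique hpartial ?_
  convert hcot.add ((Complex.continuous_ofReal.tendsto _).comp htail) using 1
  · ext N
    simp only [Function.comp_apply, Real.rpow_neg_one, sum_range_inv_sub_inv_eq_sum_cotTerm]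
  · simp

open HurwitzZeta in
lemma hurwitzZetaOdd_ofReal_eq_tsum {a s : ℝ} (ha : 0 ≤ a) (ha' : a ≤ 1) (hs : 1 < s) :
    hurwitzZetaOdd a s = ((∑' n : ℕ, ((n + a) ^ (-s) - (n + 1 - a) ^ (-s)) : ℝ) / 2 : ℂ) := by
  rw [← (hasSum_nat_hurwitzZetaOdd_of_mem_Icc ⟨ha, ha'⟩ (s := s) (by simpa)).tsum_eq,
    Complex.ofReal_tsum, ← tsum_div_const]
  refine tsum_congr fun n ↦ ?_
  rw [Complex.ofReal_sub, Complex.ofReal_cpow (by positivity), Complex.ofReal_cpow (by linarith)]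
  simp [Complex.cpow_neg]

lemma tendsto_tsum_hurwitzOddTerm {a : ℝ} (ha : 0 < a) (ha' : a < 1) :
    Tendsto (fun s : ℝ ↦ ∑' n : ℕ, ((n + a) ^ (-s) - (n + 1 - a) ^ (-s))) (𝓝[>] 1)
      (𝓝 (∑' n : ℕ, ((n + a) ^ (-1 : ℝ) - (n + 1 - a) ^ (-1 : ℝ)))) := by
  refine tendsto_tsum_of_dominated_convergence
    (summable_const_mul_one_div_add_one_sq (2 * min a (1 - a) ^ (-3 : ℝ))) (fun n ↦ ?_) ?_
  · have hcont {x : ℝ} (hx : 0 < x) : ContinuousAt (fun s : ℝ ↦ x ^ (-s)) 1 :=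
      continuousAt_const.rpow continuousAt_id.neg (.inl hx.ne')
    exact ((hcont (by positivity)).sub (hcont (by linarith))).tendsto.mono_left nhdsWithin_le_nhds
  · filter_upwards [Ioo_mem_nhdsGT (one_lt_two : (1 : ℝ) < 2)] with s hs n
    exact abs_hurwitzOddTerm_le ha ha' (Set.Ioo_subset_Icc_self hs) n

open HurwitzZeta in
theorem hurwitzZetaOdd_one {a : ℝ} (ha : 0 < a) (ha' : a < 1) :
    hurwitzZetaOdd a 1 = Real.pi * Complex.cot (Real.pi * a) / 2 := by
  have hcont : Tendsto (fun s : ℝ ↦ hurwitzZetaOdd a s) (𝓝[>] 1) (𝓝 (hurwitzZetaOdd a 1)) := by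
    rw [← Complex.ofReal_one]
    exact (((differentiable_hurwitzZetaOdd a).continuous.comp
      Complex.continuous_ofReal).tendsto 1).mono_left nhdsWithin_le_nhds
  have hseries := ((Complex.continuous_ofReal.tendsto _).comp
    (tendsto_tsum_hurwitzOddTerm ha ha')).div_const 2
  rw [tsum_inv_sub_inv_eq_cot ha ha'] at hseries
  refine tendsto_nhds_unique hcont (hseries.congr' ?_)
  filter_upwards [self_mem_nhdsWithin] with s hs
  exact (hurwitzZetaOdd_ofReal_eq_tsum ha.le ha'.le hs).symm

end HurwitzZetaOddOne

section LFunctionOne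

lemma sub_one_mul_sum_natCast_mul_pow {R : Type*} [CommRing R] (z : R) (n : ℕ) :
    (z - 1) * ∑ j ∈ range n, (j : R) * z ^ j = n * z ^ n - z * ∑ j ∈ range n, z ^ j := by
  induction n with
  | zero => simp
  | succ n ih =>
    rw [sum_range_succ, sum_range_succ, mul_add, ih]
    push_cast
    ring

lemma sub_one_mul_sum_natCast_mul_pow_of_pow_eq_one {R : Type*} [CommRing R] [IsDomain R] {z : R}
    {n : ℕ} (hz : z ^ n = 1) (hz' : z ≠ 1) :
    (z - 1) * ∑ j ∈ range n, (j : R) * z ^ j = n := by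
  have hgeom : ∑ j ∈ range n, z ^ j = 0 :=
    eq_zero_of_ne_zero_of_mul_right_eq_zero (sub_ne_zero.2 hz') (by rw [geom_sum_mul, hz, sub_self])
  rw [sub_one_mul_sum_natCast_mul_pow, hgeom, hz]
  simp

variable {N : ℕ} [NeZero N]

lemma natCast_mul_cot_eq {k : ZMod N} (hk : k ≠ 0) :
    N * Complex.cot (Real.pi * (k.val / N : ℝ)) =
      Complex.I * (N + 2 * ∑ j : ZMod N, (j.val : ℂ) * ZMod.stdAddChar (j * k)) := by
  set z := ZMod.stdAddChar k with hz
  have hz_exp : z = Complex.exp (2 * Real.pi * Complex.I * (k.val / N : ℝ)) := by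
    have := ZMod.stdAddChar_coe (N := N) k.val
    rw [Int.cast_natCast, ZMod.natCast_zmod_val] at this
    rw [hz, this]
    push_cast
    rw [mul_div_assoc]
  have hz_pow (j : ℕ) : ZMod.stdAddChar ((j : ZMod N) * k) = z ^ j := by
    rw [hz, ← AddChar.map_nsmul_eq_pow, nsmul_eq_mul]
  have hz_ne : z ≠ 1 := by
    rwa [hz, ← AddChar.map_zero_eq_one (ZMod.stdAddChar (N := N)), ZMod.injective_stdAddChar.ne_iff]
  have hz_N : z ^ N = 1 := by simp [← hz_pow]
  have hsum : (z - 1) * ∑ j : ZMod N, (j.val : ℂ) * ZMod.stdAddChar (j * k) = N := by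
    rw [← sub_one_mul_sum_natCast_mul_pow_of_pow_eq_one hz_N hz_ne, sum_zmod_eq_sum_range]
    congr 1
    refine sum_congr rfl fun j hj ↦ ?_
    rw [ZMod.val_cast_of_lt (mem_range.1 hj), hz_pow]
  rw [Complex.cot_pi_eq_exp_ratio, ← hz_exp, ← mul_div_assoc,
    div_eq_iff (mul_ne_zero Complex.I_ne_zero (sub_ne_zero.2 hz_ne.symm))]
  linear_combination (-2 : ℂ) * hsum + (-(N : ℂ) * (1 - z) -
    2 * (∑ j : ZMod N, (j.val : ℂ) * ZMod.stdAddChar (j * k)) * (1 - z)) * Complex.I_sq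

lemma hurwitzZetaOdd_toAddCircle_one {k : ZMod N} (hk : k ≠ 0) :
    HurwitzZeta.hurwitzZetaOdd (ZMod.toAddCircle k) 1 =
      Real.pi * Complex.I / (2 * N) *
        (N + 2 * ∑ j : ZMod N, (j.val : ℂ) * ZMod.stdAddChar (j * k)) := by
  have hN : (0 : ℝ) < N := Nat.cast_pos.2 (NeZero.pos N)
  have hk_pos : (0 : ℝ) < k.val := Nat.cast_pos.2 (ZMod.val_pos.2 hk)
  have hN' : (N : ℂ) ≠ 0 := NeZero.ne _
  rw [ZMod.toAddCircle_apply, hurwitzZetaOdd_one (div_pos hk_pos hN)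
    ((div_lt_one hN).2 (Nat.cast_lt.2 k.val_lt))]
  have hcot := natCast_mul_cot_eq hk
  field_simp
  linear_combination hcot

theorem LFunction_one_of_odd_of_isPrimitive {χ : DirichletCharacter ℂ N} (hodd : χ.Odd)
    (hχ : χ.IsPrimitive) : χ.LFunction 1 =
      Real.pi * Complex.I * gaussSum χ ZMod.stdAddChar / N ^ 2 * ∑ j : ZMod N, χ⁻¹ j * j.val := by
  have hχ_ne : χ ≠ 1 := by
    rintro rfl
    exact hodd.not_even _ (MulChar.one_apply isUnit_one.neg)
  have hN' : (N : ℂ) ≠ 0 := NeZero.ne _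
  have hterm (k : ZMod N) : χ k * HurwitzZeta.hurwitzZetaOdd (ZMod.toAddCircle k) 1 =
      Real.pi * Complex.I / (2 * N) * (N * χ k +
        2 * ∑ j : ZMod N, (j.val : ℂ) * (χ k * ZMod.stdAddChar (j * k))) := by
    by_cases hk : k = 0
    · simp [hk, hodd.to_fun.map_zero]
    · rw [hurwitzZetaOdd_toAddCircle_one hk]
      simp only [mul_left_comm _ (χ k), ← mul_sum]
      ring
  have hgauss (j : ZMod N) :
      ∑ k, χ k * ZMod.stdAddChar (j * k) = χ⁻¹ j * gaussSum χ ZMod.stdAddChar :=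
    gaussSum_mulShift_of_isPrimitive ZMod.stdAddChar hχ j
  rw [DirichletCharacter.LFunction, ZMod.LFunction_def_odd hodd.to_fun]
  simp_rw [hterm]
  rw [← mul_sum, sum_add_distrib, ← mul_sum, MulChar.sum_eq_zero_of_ne_one hχ_ne, ← mul_sum,
    sum_comm]
  simp_rw [← mul_sum, hgauss, ← mul_assoc, ← sum_mul]
  rw [Complex.cpow_neg_one]
  simp_rw [mul_comm (χ⁻¹ _)]
  field_simp
  ring

variable {p : ℕ} [Fact p.Prime]

lemma isPrimitive_of_ne_one {R : Type*} [CommMonoidWithZero R] {ψ : DirichletCharacter R p}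
    (hψ : ψ ≠ 1) : ψ.IsPrimitive :=
  ((Nat.dvd_prime Fact.out).1 ψ.conductor_dvd_level).resolve_left
    (DirichletCharacter.eq_one_iff_conductor_eq_one.not.1 hψ)

theorem LFunction_legendreChar_one (hp : p % 4 = 3) :
    (legendreChar p).LFunction 1 =
      Real.pi / (√p : ℝ) * (-(1 / p) * ∑ k ∈ range p, (legendreSym p k : ℂ) * k) := by
  have hodd : (legendreChar p).Odd := by
    rw [DirichletCharacter.Odd, legendreChar_neg_one (by omega), Odd.neg_one_pow]
    exact Nat.odd_iff.2 (by omega)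
  have hprim := isPrimitive_of_ne_one (legendreChar_ne_one (p := p) (by omega))
  have hp_sqrt : ((√p : ℝ) : ℂ) * (√p : ℝ) = p := by
    rw [← Complex.ofReal_mul, Real.mul_self_sqrt p.cast_nonneg, Complex.ofReal_natCast]
  have hp_ne : (p : ℂ) ≠ 0 := NeZero.ne _
  have hsqrt_ne : ((√p : ℝ) : ℂ) ≠ 0 := fun h ↦ hp_ne (by rw [← hp_sqrt, h, zero_mul])
  have hsum : ∑ j : ZMod p, legendreChar p j * j.val =
      ∑ k ∈ range p, (legendreSym p k : ℂ) * k := by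
    rw [sum_zmod_eq_sum_range]
    refine sum_congr rfl fun k hk ↦ ?_
    rw [legendreChar_natCast, ZMod.val_cast_of_lt (mem_range.1 hk)]
  rw [LFunction_one_of_odd_of_isPrimitive hodd hprim, isQuadratic_legendreChar.inv,
    gaussSum_legendreChar (by omega), if_neg (by omega), hsum]
  field_simp
  rw [Complex.I_sq, sq, hp_sqrt]
  ring

end LFunctionOne

section RingOfIntegers

open NumberField

lemma exists_intCast_eq_of_squarefree_mul_sq {d n : ℤ} (hd : Squarefree d) {x : ℚ}
    (hx : d * x ^ 2 = n) : ∃ m : ℤ, (m : ℚ) = x := by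
  have hd0 : (d : ℚ) ≠ 0 := mod_cast hd.ne_zero
  have hdx : (d * x) ^ 2 = ((d * n : ℤ) : ℚ) := by
    push_cast
    rw [← hx]
    ring
  obtain ⟨c, hc⟩ : ∃ c : ℤ, (c : ℚ) = d * x := by
    refine IsIntegrallyClosed.isIntegral_iff.1 (IsIntegral.of_pow two_pos ?_)
    rw [hdx]
    exact isIntegral_algebraMap (R := ℤ)
  obtain ⟨m, rfl⟩ : d ∣ c := by
    rw [← hd.dvd_pow_iff_dvd two_ne_zero]
    refine ⟨n, ?_⟩
    rw [← hc] at hdx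
    exact_mod_cast hdx
  refine ⟨m, mul_left_cancel₀ hd0 ?_⟩
  rw [← hc]
  push_cast
  rfl

variable {a b : ℤ}

lemma isIntegral_norm_and_trace {z : QuadraticAlgebra ℚ a b} (hz : IsIntegral ℤ z) :
    IsIntegral ℤ z.norm ∧ IsIntegral ℤ z.trace := by
  have hstar : IsIntegral ℤ (star z) :=
    hz.map (starRingEnd (QuadraticAlgebra ℚ (a : ℚ) b)).toIntAlgHom
  have hinj := QuadraticAlgebra.algebraMap_injective (R := ℚ) (a := (a : ℚ)) (b := b)
  rw [← isIntegral_algebraMap_iff hinj, ← isIntegral_algebraMap_iff hinj,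
    QuadraticAlgebra.algebraMap_norm_eq_mul_star, QuadraticAlgebra.algebraMap_trace_eq_add_star]
  exact ⟨hz.mul hstar, hz.add hstar⟩

lemma exists_intCast_eq_of_isIntegral (hd : Squarefree (b ^ 2 + 4 * a))
    {z : QuadraticAlgebra ℚ a b} (hz : IsIntegral ℤ z) :
    ∃ m n : ℤ, (m : ℚ) = z.re ∧ (n : ℚ) = z.im := by
  obtain ⟨hnorm, htrace⟩ := isIntegral_norm_and_trace hz
  obtain ⟨N, hN⟩ := IsIntegrallyClosed.isIntegral_iff.1 hnorm
  obtain ⟨T, hT⟩ := IsIntegrallyClosed.isIntegral_iff.1 htrace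
  simp only [QuadraticAlgebra.norm_def, QuadraticAlgebra.trace_def, algebraMap_int_eq,
    eq_intCast] at hN hT
  obtain ⟨n, hn⟩ : ∃ n : ℤ, (n : ℚ) = z.im := by
    refine exists_intCast_eq_of_squarefree_mul_sq hd (n := T ^ 2 - 4 * N) ?_
    push_cast
    rw [hN, hT]
    ring
  obtain ⟨m, hm⟩ : ∃ m : ℤ, (m : ℚ) = z.re := by
    refine IsIntegrallyClosed.isIntegral_iff.1
      ⟨.X ^ 2 + .C (b * n) * .X - .C (a * n ^ 2 + N), by monicity!, ?_⟩
    simp only [Polynomial.eval₂_sub, Polynomial.eval₂_add, Polynomial.eval₂_mul,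
      Polynomial.eval₂_X_pow, Polynomial.eval₂_X, Polynomial.eval₂_C, algebraMap_int_eq,
      Int.coe_castRingHom, Int.cast_add, Int.cast_mul, Int.cast_pow, hN, hn]
    ring
  exact ⟨m, n, hm, hn⟩

variable {K : Type*} [Field K] [CharZero K]

lemma exists_algEquiv_rat {θ : K} (hθ : θ * θ = a + b * θ)
    (hirr : ∀ r : ℚ, r ^ 2 ≠ a + b * r) (hgen : Algebra.adjoin ℚ {θ} = ⊤) :
    ∃ f : QuadraticAlgebra ℚ a b ≃ₐ[ℚ] K, ∀ z, f z = z.re + z.im * θ := by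
  have : Fact (∀ r : ℚ, r ^ 2 ≠ a + b * r) := ⟨hirr⟩
  let f : QuadraticAlgebra ℚ a b →ₐ[ℚ] K :=
    QuadraticAlgebra.lift ⟨θ, by simpa [Algebra.smul_def] using hθ⟩
  have hf (z) : f z = z.re + z.im * θ := by
    change z.re • (1 : K) + z.im • θ = _
    simp [Algebra.smul_def]
  have hsurj : Function.Surjective f := by
    rw [← AlgHom.range_eq_top, eq_top_iff, ← hgen, Algebra.adjoin_le_iff,
      Set.singleton_subset_iff]
    exact ⟨⟨0, 1⟩, by simp [hf]⟩
  exact ⟨.ofBijective f ⟨f.toRingHom.injective, hsurj⟩, hf⟩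

theorem nonempty_algEquiv_ringOfIntegers {θ : K} (hθ : θ * θ = a + b * θ)
    (hirr : ∀ r : ℚ, r ^ 2 ≠ a + b * r) (hgen : Algebra.adjoin ℚ {θ} = ⊤)
    (hd : Squarefree (b ^ 2 + 4 * a)) : Nonempty (QuadraticAlgebra ℤ a b ≃ₐ[ℤ] 𝓞 K) := by
  obtain ⟨f, hf⟩ := exists_algEquiv_rat hθ hirr hgen
  have hθ_int : IsIntegral ℤ θ := by
    refine ⟨.X ^ 2 - .C b * .X - .C a, by monicity!, ?_⟩
    simp only [Polynomial.eval₂_sub, Polynomial.eval₂_mul, Polynomial.eval₂_X_pow,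
      Polynomial.eval₂_X, Polynomial.eval₂_C, algebraMap_int_eq, Int.coe_castRingHom]
    linear_combination hθ
  obtain ⟨ω, rfl⟩ : ∃ ω : 𝓞 K, algebraMap (𝓞 K) K ω = θ := ⟨⟨θ, hθ_int⟩, rfl⟩
  let g : QuadraticAlgebra ℤ a b →ₐ[ℤ] 𝓞 K :=
    QuadraticAlgebra.lift ⟨ω, RingOfIntegers.coe_injective (by simpa using hθ)⟩
  have hg (z) : algebraMap (𝓞 K) K (g z) = f ⟨z.re, z.im⟩ := by
    simp [g, QuadraticAlgebra.lift_apply_apply, hf]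
  refine ⟨.ofBijective g ⟨fun x y hxy ↦ ?_, fun x ↦ ?_⟩⟩
  · have h := congrArg (algebraMap (𝓞 K) K) hxy
    rw [hg, hg, f.injective.eq_iff, QuadraticAlgebra.mk.injEq] at h
    ext
    · exact_mod_cast h.1
    · exact_mod_cast h.2
  · have hx : IsIntegral ℤ (f.symm x) :=
      (RingOfIntegers.isIntegral_coe x).map (f.symm.toAlgHom.restrictScalars ℤ)
    obtain ⟨m, n, hm, hn⟩ := exists_intCast_eq_of_isIntegral hd hx
    refine ⟨⟨m, n⟩, RingOfIntegers.coe_injective ?_⟩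
    rw [hg, hm, hn, QuadraticAlgebra.mk_eta, f.apply_symm_apply]

end RingOfIntegers

section DedekindZetaResidue

open NumberField

lemma regulator_eq_one_of_rank_eq_zero (K : Type*) [Field K] [NumberField K]
    (h : Units.rank K = 0) : Units.regulator K = 1 := by
  classical
  obtain ⟨w₀⟩ : Nonempty (InfinitePlace K) := inferInstance
  have : IsEmpty {w : InfinitePlace K // w ≠ w₀} :=
    ⟨fun w ↦ w.2 (Fintype.card_le_one_iff.1 (Nat.sub_eq_zero_iff_le.1 h) _ _)⟩
  have : IsEmpty (Fin (Units.rank K)) := by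
    rw [h]
    infer_instance
  rw [Units.regulator_eq_det K w₀ (Equiv.equivOfIsEmpty _ _), Matrix.det_isEmpty, abs_one]

variable {a b : ℤ}

lemma four_mul_norm (z : QuadraticAlgebra ℤ a b) :
    4 * z.norm = (2 * z.re + b * z.im) ^ 2 - (b ^ 2 + 4 * a) * z.im ^ 2 := by
  rw [QuadraticAlgebra.norm_def]
  ring

lemma eq_one_or_eq_neg_one_of_isUnit (hd : b ^ 2 + 4 * a < -4) {z : QuadraticAlgebra ℤ a b}
    (hz : IsUnit z) : z = 1 ∨ z = -1 := by
  rw [QuadraticAlgebra.isUnit_iff_norm_isUnit] at hz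
  have him : z.im = 0 := by
    by_contra him
    have him_sq : 0 < z.im ^ 2 := by positivity
    have hnorm : z.norm ≤ 1 := by
      rcases Int.isUnit_iff.1 hz with h | h <;> omega
    nlinarith [four_mul_norm z, sq_nonneg (2 * z.re + b * z.im)]
  have hre : IsUnit z.re := by
    rw [QuadraticAlgebra.norm_def, him] at hz
    exact isUnit_of_mul_isUnit_left (y := z.re) (by simpa using hz)
  refine (Int.isUnit_iff.1 hre).imp (fun h ↦ ?_) (fun h ↦ ?_)
  · ext <;> simp [h, him, QuadraticAlgebra.re_one, QuadraticAlgebra.im_one]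
  · ext <;> simp [h, him, QuadraticAlgebra.re_one, QuadraticAlgebra.im_one]

lemma trace_quadraticAlgebra (z : QuadraticAlgebra ℤ a b) :
    Algebra.trace ℤ (QuadraticAlgebra ℤ a b) z = z.trace := by
  let B := QuadraticAlgebra.basis a b
  have hB₀ : B 0 = 1 := by
    ext <;> simp [B, QuadraticAlgebra.basis, QuadraticAlgebra.re_one, QuadraticAlgebra.im_one]
  have hB₁ : B 1 = QuadraticAlgebra.omega := by ext <;> simp [B, QuadraticAlgebra.basis]
  rw [Algebra.trace_eq_matrix_trace B, Matrix.trace_fin_two, Algebra.leftMulMatrix_eq_repr_mul,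
    Algebra.leftMulMatrix_eq_repr_mul, hB₀, hB₁]
  simp only [B, mul_one, QuadraticAlgebra.basis_repr_apply,
    QuadraticAlgebra.re_mul, QuadraticAlgebra.im_mul, QuadraticAlgebra.omega_re,
    QuadraticAlgebra.omega_im, QuadraticAlgebra.trace_def, Matrix.cons_val_zero,
    Matrix.cons_val_one, Matrix.cons_val_fin_one]
  ring

variable {K : Type*} [Field K]

lemma isTotallyComplex (e : QuadraticAlgebra ℤ a b ≃ₐ[ℤ] 𝓞 K) (hd : b ^ 2 + 4 * a < 0) :
    IsTotallyComplex K := by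
  refine ⟨fun v ↦ InfinitePlace.not_isReal_iff_isComplex.1 fun hv ↦ ?_⟩
  let φ := (InfinitePlace.embedding_of_isReal hv).comp
    ((algebraMap (𝓞 K) K).comp (e : QuadraticAlgebra ℤ a b →+* 𝓞 K))
  have hω : φ .omega * φ .omega = a + b * φ .omega := by
    rw [← map_mul, QuadraticAlgebra.omega_mul_omega_eq_add]
    simp
  have hd' : (b : ℝ) ^ 2 + 4 * a < 0 := by exact_mod_cast hd
  nlinarith [sq_nonneg (2 * φ .omega - b)]

variable [NumberField K]

lemma finrank_eq_two (e : QuadraticAlgebra ℤ a b ≃ₐ[ℤ] 𝓞 K) : Module.finrank ℚ K = 2 := by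
  rw [← RingOfIntegers.rank, ← e.toLinearEquiv.finrank_eq, QuadraticAlgebra.finrank_eq_two]

lemma torsionOrder_eq_two (e : QuadraticAlgebra ℤ a b ≃ₐ[ℤ] 𝓞 K) (hd : b ^ 2 + 4 * a < -4) :
    Units.torsionOrder K = 2 := by
  have hsub : (Units.torsion K : Set (𝓞 K)ˣ) ⊆ {1, -1} := by
    intro u _
    refine (eq_one_or_eq_neg_one_of_isUnit hd (u.isUnit.map e.symm)).imp (fun h ↦ ?_) (fun h ↦ ?_)
    · rwa [map_eq_one_iff e.symm e.symm.injective, Units.val_eq_one] at h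
    · rw [AlgEquiv.symm_apply_eq, map_neg, map_one] at h
      exact Units.ext h
  have hle : Units.torsionOrder K ≤ 2 :=
    (Set.ncard_le_ncard hsub).trans ((Set.ncard_insert_le _ _).trans_eq (by simp))
  obtain ⟨n, hn⟩ := Units.even_torsionOrder K
  have := Units.torsionOrder_pos K
  omega

lemma discr_eq (e : QuadraticAlgebra ℤ a b ≃ₐ[ℤ] 𝓞 K) : discr K = b ^ 2 + 4 * a := by
  let B := QuadraticAlgebra.basis a b
  have hB₀ : B 0 = ⟨1, 0⟩ := by simp [B, QuadraticAlgebra.basis]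
  have hB₁ : B 1 = ⟨0, 1⟩ := by simp [B, QuadraticAlgebra.basis]
  rw [← discr_eq_discr K (B.map e.toLinearEquiv), Algebra.discr_def, Matrix.det_fin_two]
  simp only [Algebra.traceMatrix_apply, Algebra.traceForm_apply, Module.Basis.map_apply,
    AlgEquiv.toLinearEquiv_apply, ← map_mul, Algebra.trace_eq_of_algEquiv e,
    trace_quadraticAlgebra, QuadraticAlgebra.trace_def, hB₀, hB₁, QuadraticAlgebra.mk_mul_mk]
  ring

theorem dedekindZeta_residue_eq (e : QuadraticAlgebra ℤ a b ≃ₐ[ℤ] 𝓞 K)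
    (hd : b ^ 2 + 4 * a < -4) :
    dedekindZeta_residue K = Real.pi / √(-(b ^ 2 + 4 * a)) * classNumber K := by
  have := isTotallyComplex e (by omega)
  have hreal : InfinitePlace.nrRealPlaces K = 0 := IsTotallyComplex.nrRealPlaces_eq_zero K
  have hcomplex : InfinitePlace.nrComplexPlaces K = 1 := by
    have := IsTotallyComplex.finrank K
    rw [finrank_eq_two e] at this
    omega
  have hrank : Units.rank K = 0 := by
    rw [Units.rank, InfinitePlace.card_eq_nrRealPlaces_add_nrComplexPlaces, hreal, hcomplex]
  have hd' : (b : ℝ) ^ 2 + 4 * a < 0 := by exact_mod_cast (by omega : b ^ 2 + 4 * a < 0)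
  rw [dedekindZeta_residue_def, hreal, hcomplex, regulator_eq_one_of_rank_eq_zero K hrank,
    torsionOrder_eq_two e hd, discr_eq e]
  push_cast
  rw [abs_of_neg hd']
  field_simp

end DedekindZetaResidue

section IdealCounting

lemma eq_of_mul_eq_of_dvd_pow {m n x y r : ℕ} (hmn : m.Coprime n) (hxy : x * y = m * n)
    (hx : x ∣ m ^ r) (hy : y ∣ n ^ r) : x = m ∧ y = n := by
  have hxn : x.Coprime n := (hmn.pow_left r).coprime_dvd_left hx
  have hmy : m.Coprime y := (hmn.pow_right r).coprime_dvd_right hy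
  exact ⟨Nat.dvd_antisymm (hxn.dvd_of_dvd_mul_right (hxy ▸ dvd_mul_right x y))
      (hmy.dvd_of_dvd_mul_right (hxy ▸ dvd_mul_right m n)),
    Nat.dvd_antisymm (hmy.symm.dvd_of_dvd_mul_left (hxy ▸ dvd_mul_left y x))
      (hxn.symm.dvd_of_dvd_mul_left (hxy ▸ dvd_mul_left n m))⟩

variable {S : Type*} [CommRing S] [IsDedekindDomain S]

lemma le_of_pow_mul_pow_eq {P P' : Ideal S} (hcop : IsCoprime P P') (hP₀ : P ≠ ⊥)
    (hP : P ≠ ⊤) {i j i' j' : ℕ} (h : P ^ i * P' ^ j = P ^ i' * P' ^ j') : i ≤ i' := by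
  have hdvd : P ^ i ∣ P ^ i' := hcop.pow.dvd_of_dvd_mul_right (h ▸ dvd_mul_right _ _)
  exact (pow_dvd_pow_iff hP₀ (by rwa [Ideal.isUnit_iff])).1 hdvd

variable [Module.Free ℤ S]

lemma isCoprime_of_coprime_absNorm {I J : Ideal S} (h : I.absNorm.Coprime J.absNorm) :
    IsCoprime I J := by
  obtain ⟨u, v, huv⟩ := Nat.isCoprime_iff_coprime.2 h
  rw [Ideal.isCoprime_iff_exists]
  refine ⟨u * I.absNorm, I.mul_mem_left _ I.absNorm_mem, v * J.absNorm,
    J.mul_mem_left _ J.absNorm_mem, by exact_mod_cast congrArg (Int.cast : ℤ → S) huv⟩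

variable [Module.Finite ℤ S]

lemma card_absNorm_eq_mul {m n : ℕ} (hmn : m.Coprime n) :
    Nat.card {I : Ideal S // I.absNorm = m * n} =
      Nat.card {I : Ideal S // I.absNorm = m} * Nat.card {I : Ideal S // I.absNorm = n} := by
  rw [← Nat.card_prod]
  refine (Nat.card_eq_of_bijective (fun x ↦ ⟨x.1.1 * x.2.1, by rw [map_mul, x.1.2, x.2.2]⟩)
    ⟨?_, ?_⟩).symm
  · rintro ⟨⟨I, hI⟩, J, hJ⟩ ⟨⟨I', hI'⟩, J', hJ'⟩ h
    replace h : I * J = I' * J' := congrArg Subtype.val h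
    have hIJ' : IsCoprime I J' := isCoprime_of_coprime_absNorm (by rwa [hI, hJ'])
    have hI'J : IsCoprime I' J := isCoprime_of_coprime_absNorm (by rwa [hI', hJ])
    have hII' : I = I' := dvd_antisymm (hIJ'.dvd_of_dvd_mul_right (h ▸ dvd_mul_right I J))
      (hI'J.dvd_of_dvd_mul_right (h ▸ dvd_mul_right I' J'))
    have hJJ' : J = J' := dvd_antisymm (hI'J.symm.dvd_of_dvd_mul_left (h ▸ dvd_mul_left J I))
      (hIJ'.symm.dvd_of_dvd_mul_left (h ▸ dvd_mul_left J' I'))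
    subst hII' hJJ'
    rfl
  · rintro ⟨L, hL⟩
    have hdvd : L ∣ Ideal.span {(m : S)} * Ideal.span {(n : S)} := by
      rw [Ideal.span_singleton_mul_span_singleton, Ideal.dvd_span_singleton, ← Nat.cast_mul, ← hL]
      exact L.absNorm_mem
    obtain ⟨I, J, hI, hJ, rfl⟩ := exists_dvd_and_dvd_of_dvd_mul hdvd
    rw [map_mul] at hL
    obtain ⟨hIm, hJn⟩ := eq_of_mul_eq_of_dvd_pow hmn hL
      (by simpa only [Ideal.absNorm_span_natCast] using map_dvd Ideal.absNorm hI)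
      (by simpa only [Ideal.absNorm_span_natCast] using map_dvd Ideal.absNorm hJ)
    exact ⟨⟨⟨I, hIm⟩, J, hJn⟩, rfl⟩

lemma mem_closure_of_absNorm_eq_pow {q k : ℕ} (hq : q ≠ 0) {I : Ideal S}
    (hI : I.absNorm = q ^ k) :
    I ∈ Submonoid.closure {Q : Ideal S | Q.IsPrime ∧ (q : S) ∈ Q} := by
  have hI₀ : I ≠ ⊥ := by
    rw [Ne, ← Ideal.absNorm_eq_zero_iff, hI]
    exact pow_ne_zero k hq
  rw [← Ideal.prod_normalizedFactors_eq_self hI₀]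
  refine Submonoid.multiset_prod_mem _ _ fun Q hQ ↦ Submonoid.subset_closure ?_
  have hQ_prime : Q.IsPrime :=
    Ideal.isPrime_of_prime (UniqueFactorizationMonoid.prime_of_normalized_factor Q hQ)
  refine ⟨hQ_prime, hQ_prime.mem_of_pow_mem k ?_⟩
  rw [← Nat.cast_pow, ← hI]
  exact Ideal.dvd_iff_le.1 (UniqueFactorizationMonoid.dvd_of_mem_normalizedFactors hQ)
    I.absNorm_mem

lemma card_absNorm_eq_pow_of_unique_prime {q f : ℕ} (hq : 1 < q) (hf : f ≠ 0) {P : Ideal S}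
    (hP : P.absNorm = q ^ f) (hunique : ∀ Q : Ideal S, Q.IsPrime → (q : S) ∈ Q → Q = P) (k : ℕ) :
    Nat.card {I : Ideal S // I.absNorm = q ^ k} = if f ∣ k then 1 else 0 := by
  have hpow {I : Ideal S} (hI : I.absNorm = q ^ k) : ∃ i, P ^ i = I ∧ f * i = k := by
    have hmem := Submonoid.closure_mono (t := {P}) (fun Q hQ ↦ hunique Q hQ.1 hQ.2)
      (mem_closure_of_absNorm_eq_pow (by omega) hI)
    obtain ⟨i, rfl⟩ := Submonoid.mem_closure_singleton.1 hmem
    rw [map_pow, hP, ← pow_mul] at hI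
    exact ⟨i, rfl, Nat.pow_right_injective hq hI⟩
  split_ifs with hfk
  · obtain ⟨j, rfl⟩ := hfk
    rw [Nat.card_eq_one_iff_exists]
    refine ⟨⟨P ^ j, by rw [map_pow, hP, pow_mul]⟩, fun ⟨I, hI⟩ ↦ Subtype.ext ?_⟩
    obtain ⟨i, rfl, hi⟩ := hpow hI
    exact congrArg (P ^ ·) (Nat.eq_of_mul_eq_mul_left (Nat.pos_of_ne_zero hf) hi)
  · have : IsEmpty {I : Ideal S // I.absNorm = q ^ k} := by
      refine ⟨fun ⟨I, hI⟩ ↦ hfk ?_⟩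
      obtain ⟨i, -, rfl⟩ := hpow hI
      exact dvd_mul_right f i
    exact Nat.card_of_isEmpty

lemma card_absNorm_eq_pow_of_two_primes {q : ℕ} (hq : 1 < q) {P P' : Ideal S}
    (hP : P.absNorm = q) (hP' : P'.absNorm = q) (hcop : IsCoprime P P')
    (hpair : ∀ Q : Ideal S, Q.IsPrime → (q : S) ∈ Q → Q = P ∨ Q = P') (k : ℕ) :
    Nat.card {I : Ideal S // I.absNorm = q ^ k} = k + 1 := by
  have hP₀ : P ≠ ⊥ := by
    rw [Ne, ← Ideal.absNorm_eq_zero_iff]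
    omega
  have hP₁ : P ≠ ⊤ := by
    rw [Ne, ← Ideal.absNorm_eq_one_iff]
    omega
  have hnorm (i : Fin (k + 1)) : (P ^ (i : ℕ) * P' ^ (k - i)).absNorm = q ^ k := by
    rw [map_mul, map_pow, map_pow, hP, hP', ← pow_add, Nat.add_sub_cancel' (by omega)]
  rw [← Nat.card_fin (k + 1)]
  refine (Nat.card_eq_of_bijective (fun i ↦ ⟨_, hnorm i⟩) ⟨fun i j h ↦ ?_, ?_⟩).symm
  · replace h : P ^ (i : ℕ) * P' ^ (k - i) = P ^ (j : ℕ) * P' ^ (k - j) := congrArg Subtype.val h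
    exact Fin.ext ((le_of_pow_mul_pow_eq hcop hP₀ hP₁ h).antisymm
      (le_of_pow_mul_pow_eq hcop hP₀ hP₁ h.symm))
  · rintro ⟨I, hI⟩
    have hmem := Submonoid.closure_mono (t := {P, P'}) (fun Q hQ ↦ hpair Q hQ.1 hQ.2)
      (mem_closure_of_absNorm_eq_pow (by omega) hI)
    obtain ⟨i, j, rfl⟩ := (Submonoid.mem_closure_pair _ _ _).1 hmem
    rw [map_mul, map_pow, map_pow, hP, hP', ← pow_add] at hI
    obtain rfl : i + j = k := Nat.pow_right_injective hq hI
    exact ⟨⟨i, by omega⟩, by simp⟩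

end IdealCounting

section PrimeSplitting

open QuadraticAlgebra

lemma absNorm_ker_ringHom_zmod {S : Type*} [CommRing S] [IsDedekindDomain S] [Module.Free ℤ S]
    {n : ℕ} (φ : S →+* ZMod n) : (RingHom.ker φ).absNorm = n := by
  rw [Ideal.absNorm_apply, Submodule.cardQuot_apply, Nat.card_congr
    (RingHom.quotientKerEquivOfSurjective (ZMod.ringHom_surjective φ)).toEquiv, Nat.card_zmod]

variable {a b : ℤ} {S : Type*} [CommRing S] (e : QuadraticAlgebra ℤ a b ≃ₐ[ℤ] S)

include e

lemma map_omega_mul_self : e ω * e ω = a + b * e ω := by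
  rw [← map_mul, omega_mul_omega_eq_add, map_add, map_smul]
  simp

lemma exists_ringHom_zmod {n : ℕ} {r : ZMod n} (hr : r * r = a + b * r) :
    ∃ φ : S →+* ZMod n, φ (e ω) = r := by
  let φ : QuadraticAlgebra ℤ a b →ₐ[ℤ] ZMod n := lift ⟨r, by simpa using hr⟩
  refine ⟨(φ.comp e.symm.toAlgHom).toRingHom, ?_⟩
  change φ (e.symm (e ω)) = r
  simp [φ, lift_apply_apply]

lemma finrank_int_eq_two : Module.finrank ℤ S = 2 := by
  rw [← e.toLinearEquiv.finrank_eq, QuadraticAlgebra.finrank_eq_two]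

variable {q : ℕ} [Fact q.Prime]

lemma eq_ker_of_omega_sub_mem (φ : S →+* ZMod q) {t : ℤ} (ht : φ (e ω) = t) {Q : Ideal S}
    (hQ : Q ≠ ⊤) (hq : (q : S) ∈ Q) (hω : e ω - t ∈ Q) : Q = RingHom.ker φ := by
  have hmax := RingHom.ker_isMaximal_of_surjective φ (ZMod.ringHom_surjective φ)
  refine (hmax.eq_of_le hQ fun x hx ↦ ?_).symm
  obtain ⟨z, rfl⟩ := e.surjective x
  have hz : e z = (z.re + z.im * t : ℤ) + z.im * (e ω - t) := by
    conv_lhs => rw [← mk_eta z, mk_eq_add_smul_omega, map_add, map_smul]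
    simp only [algebraMap_int_eq, eq_intCast, map_intCast, zsmul_eq_mul, Int.cast_add,
      Int.cast_mul]
    ring
  have hdvd : (q : ℤ) ∣ z.re + z.im * t := by
    rw [RingHom.mem_ker, hz] at hx
    rw [← ZMod.intCast_zmod_eq_zero_iff_dvd]
    simpa [ht] using hx
  rw [hz]
  refine Q.add_mem (Q.mem_of_dvd ?_ hq) (Q.mul_mem_left _ hω)
  simpa only [eq_intCast, Int.cast_natCast] using map_dvd (Int.castRingHom S) hdvd

lemma eq_ker_or_eq_ker {φ φ' : S →+* ZMod q} (hφ : φ' (e ω) = b - φ (e ω)) {Q : Ideal S}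
    (hQ : Q.IsPrime) (hq : (q : S) ∈ Q) : Q = RingHom.ker φ ∨ Q = RingHom.ker φ' := by
  obtain ⟨t, ht⟩ := ZMod.intCast_surjective (φ (e ω))
  have hdvd : (q : ℤ) ∣ a + b * t - t * t := by
    rw [← ZMod.intCast_zmod_eq_zero_iff_dvd]
    push_cast
    rw [ht, sub_eq_zero]
    simpa using (congrArg φ (map_omega_mul_self e)).symm
  have hmul : (e ω - t) * (e ω - (b - t : ℤ)) ∈ Q := by
    have hfactor : (e ω - t) * (e ω - (b - t : ℤ)) = (a + b * t - t * t : ℤ) := by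
      push_cast
      linear_combination map_omega_mul_self e
    rw [hfactor]
    refine Q.mem_of_dvd ?_ hq
    simpa only [eq_intCast, Int.cast_natCast] using map_dvd (Int.castRingHom S) hdvd
  refine (hQ.mem_or_mem hmul).imp (eq_ker_of_omega_sub_mem e φ ht.symm hQ.ne_top hq)
    (eq_ker_of_omega_sub_mem e φ' ?_ hQ.ne_top hq)
  rw [hφ, Int.cast_sub, ht]

variable [IsDedekindDomain S] [Module.Free ℤ S]

lemma exists_root_of_absNorm_eq {Q : Ideal S} (hQ : Q.absNorm = q) :
    ∃ r : ZMod q, r * r = a + b * r := by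
  have hq : q.Prime := Fact.out
  have hcard : Nat.card (S ⧸ Q) = q := by
    rw [← Submodule.cardQuot_apply, ← Ideal.absNorm_apply, hQ]
  have := Nat.finite_of_card_ne_zero (hcard.trans_ne hq.ne_zero)
  have := Fintype.ofFinite (S ⧸ Q)
  let f := ZMod.ringEquivOfPrime (S ⧸ Q) hq (by rwa [← Nat.card_eq_fintype_card])
  refine ⟨f.symm (Ideal.Quotient.mk Q (e ω)), ?_⟩
  simpa using congrArg (fun x ↦ f.symm (Ideal.Quotient.mk Q x)) (map_omega_mul_self e)

variable [Module.Finite ℤ S]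

lemma eq_span_of_forall_not_root
    (hroot : ∀ r : ZMod q, r * r ≠ a + b * r) {Q : Ideal S} (hQ : Q.IsPrime) (hqQ : (q : S) ∈ Q) :
    Q = Ideal.span {(q : S)} := by
  have hq : q.Prime := Fact.out
  have hnorm : (Ideal.span {(q : S)}).absNorm = q ^ 2 := by
    rw [Ideal.absNorm_span_natCast, finrank_int_eq_two e]
  obtain ⟨J, hJ⟩ := Ideal.dvd_span_singleton.2 hqQ
  have hmul : Q.absNorm * J.absNorm = q ^ 2 := by rw [← map_mul, ← hJ, hnorm]
  have hQ₁ : Q.absNorm ≠ 1 := Ideal.absNorm_eq_one_iff.not.2 hQ.ne_top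
  have hQq : Q.absNorm ≠ q := fun h ↦
    let ⟨r, hr⟩ := exists_root_of_absNorm_eq e h
    hroot r hr
  have hJ₁ : J = ⊤ := by
    by_contra hJ₁
    exact hQq ((hq.mul_eq_prime_sq_iff hQ₁ (Ideal.absNorm_eq_one_iff.not.2 hJ₁)).1 hmul).1
  rw [hJ, hJ₁, Ideal.mul_top]

lemma card_absNorm_eq_pow_of_forall_not_root
    (hroot : ∀ r : ZMod q, r * r ≠ a + b * r) (k : ℕ) :
    Nat.card {I : Ideal S // I.absNorm = q ^ k} = if 2 ∣ k then 1 else 0 :=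
  card_absNorm_eq_pow_of_unique_prime (Fact.out : q.Prime).one_lt two_ne_zero
    (by rw [Ideal.absNorm_span_natCast, finrank_int_eq_two e])
    (fun _ hQ hqQ ↦ eq_span_of_forall_not_root e hroot hQ hqQ) k

lemma card_absNorm_eq_pow_of_double_root {r : ZMod q}
    (hr : r * r = a + b * r) (hr₂ : 2 * r = b) (k : ℕ) :
    Nat.card {I : Ideal S // I.absNorm = q ^ k} = 1 := by
  obtain ⟨φ, hφ⟩ := exists_ringHom_zmod e hr
  have hφ' : φ (e ω) = b - φ (e ω) := by
    rw [hφ]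
    linear_combination hr₂
  simpa using card_absNorm_eq_pow_of_unique_prime (f := 1) (Fact.out : q.Prime).one_lt
    one_ne_zero (by rw [absNorm_ker_ringHom_zmod φ, pow_one])
    (fun _ hQ hqQ ↦ or_self_iff.1 (eq_ker_or_eq_ker e hφ' hQ hqQ)) k

lemma card_absNorm_eq_pow_of_simple_root {r : ZMod q}
    (hr : r * r = a + b * r) (hr₂ : 2 * r ≠ b) (k : ℕ) :
    Nat.card {I : Ideal S // I.absNorm = q ^ k} = k + 1 := by
  obtain ⟨φ, hφ⟩ := exists_ringHom_zmod e hr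
  obtain ⟨φ', hφ'⟩ := exists_ringHom_zmod e (r := (b : ZMod q) - r) (by linear_combination hr)
  have hker : RingHom.ker φ ≠ RingHom.ker φ' := by
    intro h
    obtain ⟨t, ht⟩ := ZMod.intCast_surjective r
    have hmem : e ω - t ∈ RingHom.ker φ' := by
      rw [← h, RingHom.mem_ker, map_sub, hφ, map_intCast, ht, sub_self]
    rw [RingHom.mem_ker, map_sub, hφ', map_intCast, ht] at hmem
    exact hr₂ (by linear_combination -hmem)
  have hmax := RingHom.ker_isMaximal_of_surjective φ (ZMod.ringHom_surjective φ)
  have hmax' := RingHom.ker_isMaximal_of_surjective φ' (ZMod.ringHom_surjective φ')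
  exact card_absNorm_eq_pow_of_two_primes (Fact.out : q.Prime).one_lt
    (absNorm_ker_ringHom_zmod φ) (absNorm_ker_ringHom_zmod φ')
    (Ideal.isCoprime_of_isMaximal hker)
    (fun _ hQ hqQ ↦ eq_ker_or_eq_ker e (by rw [hφ', hφ]) hQ hqQ) k

end PrimeSplitting

section SplittingLaw

lemma exists_mul_self_eq_add_mul_iff_isSquare {F : Type*} [Field F] [NeZero (2 : F)] {a b : F} :
    (∃ r, r * r = a + b * r) ↔ IsSquare (b ^ 2 + 4 * a) := by
  have hdiscrim : discrim 1 (-b) (-a) = b ^ 2 + 4 * a := by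
    rw [discrim]
    ring
  constructor
  · rintro ⟨r, hr⟩
    exact ⟨2 * r - b, by linear_combination -4 * hr⟩
  · rintro ⟨s, hs⟩
    obtain ⟨r, hr⟩ := exists_quadratic_eq_zero one_ne_zero ⟨s, hdiscrim.trans hs⟩
    exact ⟨r, by linear_combination hr⟩

variable {p q : ℕ} [Fact p.Prime] [Fact q.Prime]

lemma legendreSym_neg_eq (hp : p % 4 = 3) (hq : q ≠ 2) :
    legendreSym q (-p) = legendreSym p q := by
  have hq_odd : q % 2 = 1 := (Fact.out : q.Prime).eq_two_or_odd.resolve_left hq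
  rw [← neg_one_mul, legendreSym.mul, legendreSym.at_neg_one hq]
  obtain h | h : q % 4 = 1 ∨ q % 4 = 3 := by omega
  · rw [ZMod.χ₄_nat_one_mod_four h, one_mul,
      legendreSym.quadratic_reciprocity_one_mod_four h (by omega)]
  · rw [ZMod.χ₄_nat_three_mod_four h, legendreSym.quadratic_reciprocity_three_mod_four hp h,
      neg_one_mul, neg_neg]

lemma natCast_zmod_ne_zero (hqp : q ≠ p) : (q : ZMod p) ≠ 0 := by
  rw [Ne, ZMod.natCast_eq_zero_iff, Nat.prime_dvd_prime_iff_eq Fact.out Fact.out]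
  exact hqp.symm

variable {m : ℤ}

lemma exists_root_two_iff (hm : (p : ℤ) + 1 = 4 * m) :
    (∃ r : ZMod 2, r * r = (-m : ℤ) + (1 : ℤ) * r) ↔ legendreSym p 2 = 1 := by
  have hsq (r : ZMod 2) : r * r = (-m : ℤ) + (1 : ℤ) * r ↔ (2 : ℤ) ∣ m := by
    have hr : r * r = r := by
      revert r
      decide
    rw [hr, Int.cast_one, one_mul, right_eq_add, ZMod.intCast_zmod_eq_zero_iff_dvd, dvd_neg]
    rfl
  have h₂ : ((2 : ℤ) : ZMod p) ≠ 0 := by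
    simpa using natCast_zmod_ne_zero (p := p) (q := 2) (by omega)
  simp only [hsq, exists_const]
  rw [legendreSym.eq_one_iff p h₂, Int.cast_ofNat, ZMod.exists_sq_eq_two_iff (by omega)]
  omega

lemma exists_root_iff_legendreSym_eq_one (hm : (p : ℤ) + 1 = 4 * m) (hqp : q ≠ p) :
    (∃ r : ZMod q, r * r = (-m : ℤ) + (1 : ℤ) * r) ↔ legendreSym p q = 1 := by
  rcases eq_or_ne q 2 with rfl | hq
  · exact exists_root_two_iff hm
  have : NeZero (2 : ZMod q) := ⟨natCast_zmod_ne_zero (q := 2) hq.symm⟩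
  have hp : ((-p : ℤ) : ZMod q) ≠ 0 := by
    simpa using natCast_zmod_ne_zero hqp.symm
  rw [exists_mul_self_eq_add_mul_iff_isSquare, ← legendreSym_neg_eq (by omega) hq,
    legendreSym.eq_one_iff q hp, show -(p : ℤ) = 1 ^ 2 + 4 * -m by linear_combination -hm]
  simp

end SplittingLaw

section ZetaFactorization

open NumberField

/-- The arithmetic function sending `n ≥ 1` to the number of ideals of norm `n` in `𝓞 K`, i.e. the
coefficients of the Dedekind zeta function of `K`. -/
noncomputable def idealCount (K : Type*) [Field K] [NumberField K] : ArithmeticFunction ℂ :=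
  ⟨fun n ↦ if n = 0 then 0 else Nat.card {I : Ideal (𝓞 K) // I.absNorm = n}, if_pos rfl⟩

variable {K : Type*} [Field K] [NumberField K]

lemma idealCount_apply {n : ℕ} (hn : n ≠ 0) :
    idealCount K n = Nat.card {I : Ideal (𝓞 K) // I.absNorm = n} :=
  if_neg hn

lemma isMultiplicative_idealCount : (idealCount K).IsMultiplicative := by
  rw [ArithmeticFunction.IsMultiplicative.iff_ne_zero]
  refine ⟨?_, fun {m n} hm hn hmn ↦ ?_⟩
  · simp [idealCount_apply, Ideal.absNorm_eq_one_iff]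
  · rw [idealCount_apply hm, idealCount_apply hn, idealCount_apply (mul_ne_zero hm hn),
      card_absNorm_eq_mul hmn, Nat.cast_mul]

lemma zetaMul_apply_prime_pow {N : ℕ} (χ : DirichletCharacter ℂ N) {q : ℕ} (hq : q.Prime)
    (k : ℕ) : χ.zetaMul (q ^ k) = ∑ i ∈ range (k + 1), χ q ^ i := by
  refine (ArithmeticFunction.coe_zeta_mul_apply (f := toArithmeticFunction (χ ·))).trans ?_
  rw [Nat.sum_divisors_prime_pow hq]
  refine sum_congr rfl fun i _ ↦ ?_
  refine (χ.apply_eq_toArithmeticFunction_apply (pow_ne_zero i hq.ne_zero)).symm.trans ?_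
  rw [Nat.cast_pow, map_pow]

lemma card_absNorm_eq_prime_pow {p q : ℕ} [Fact p.Prime] [Fact q.Prime] {m : ℤ}
    (hm : (p : ℤ) + 1 = 4 * m) (e : QuadraticAlgebra ℤ (-m) 1 ≃ₐ[ℤ] 𝓞 K) (k : ℕ) :
    (Nat.card {I : Ideal (𝓞 K) // I.absNorm = q ^ k} : ℤ) =
      ∑ i ∈ range (k + 1), legendreSym p q ^ i := by
  have hm' := congrArg (Int.cast : ℤ → ZMod q) hm
  push_cast at hm'
  rcases eq_or_ne q p with rfl | hqp
  · rw [CharP.cast_eq_zero, zero_add] at hm'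
    rw [card_absNorm_eq_pow_of_double_root e (r := 2 * (m : ZMod q))
      (by push_cast; linear_combination -m * hm') (by push_cast; linear_combination -hm'),
      (legendreSym.eq_zero_iff q q).2 (by simp), sum_range_succ']
    simp
  have hq₀ : ((q : ℤ) : ZMod p) ≠ 0 := by simpa using natCast_zmod_ne_zero hqp
  rcases legendreSym.eq_one_or_neg_one p hq₀ with h | h
  · obtain ⟨r, hr⟩ := (exists_root_iff_legendreSym_eq_one hm hqp).2 h
    have hr₂ : 2 * r ≠ (1 : ℤ) := by
      refine fun hr₂ ↦ natCast_zmod_ne_zero hqp.symm ?_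
      push_cast at hr hr₂
      linear_combination hm' + 4 * hr - (2 * r - 1) * hr₂
    simp [card_absNorm_eq_pow_of_simple_root e hr hr₂, h]
  · have hroot (r : ZMod q) : r * r ≠ (-m : ℤ) + (1 : ℤ) * r := by
      intro hr
      have := (exists_root_iff_legendreSym_eq_one hm hqp).1 ⟨r, hr⟩
      omega
    rw [card_absNorm_eq_pow_of_forall_not_root e hroot, h, neg_one_geom_sum]
    simp only [Nat.even_add_one, ← even_iff_two_dvd, ite_not, Nat.cast_ite, Nat.cast_one,
      Nat.cast_zero]

lemma idealCount_eq_zetaMul {p : ℕ} [Fact p.Prime] {m : ℤ} (hm : (p : ℤ) + 1 = 4 * m)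
    (e : QuadraticAlgebra ℤ (-m) 1 ≃ₐ[ℤ] 𝓞 K) : idealCount K = (legendreChar p).zetaMul := by
  rw [isMultiplicative_idealCount.eq_iff_eq_on_prime_powers _ _
    (legendreChar p).isMultiplicative_zetaMul]
  intro q k hq
  have : Fact q.Prime := ⟨hq⟩
  rw [zetaMul_apply_prime_pow _ hq, idealCount_apply (pow_ne_zero k hq.ne_zero),
    legendreChar_natCast]
  exact_mod_cast congrArg (Int.cast : ℤ → ℂ) (card_absNorm_eq_prime_pow hm e k)

variable {N : ℕ} [NeZero N] {χ : DirichletCharacter ℂ N}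

lemma LSeries_zetaMul {s : ℂ} (hs : 1 < s.re) :
    LSeries χ.zetaMul s = riemannZeta s * χ.LFunction s := by
  have hζ : LSeriesSummable (fun n ↦ (ArithmeticFunction.zeta : ArithmeticFunction ℂ) n) s :=
    ArithmeticFunction.LSeriesSummable_zeta_iff.2 hs
  have hχ : LSeriesSummable (fun n ↦ toArithmeticFunction (χ ·) n) s :=
    (LSeriesSummable_congr _ fun h ↦ (χ.apply_eq_toArithmeticFunction_apply h).symm).2
      (ZMod.LSeriesSummable_of_one_lt_re χ hs)
  rw [χ.LFunction_eq_LSeries hs, ← ArithmeticFunction.LSeries_zeta_eq_riemannZeta hs,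
    LSeries_congr χ.apply_eq_toArithmeticFunction_apply]
  exact ArithmeticFunction.LSeries_mul' hζ hχ

open Filter Topology in
lemma dedekindZeta_residue_eq_LFunction_one (hχ : χ ≠ 1) (h : idealCount K = χ.zetaMul) :
    (dedekindZeta_residue K : ℂ) = χ.LFunction 1 := by
  have hofReal : Tendsto (fun s : ℝ ↦ (s : ℂ)) (𝓝[>] 1) (𝓝[≠] 1) := by
    refine tendsto_nhdsWithin_of_tendsto_nhds_of_eventually_within _ ?_ ?_
    · exact (Complex.continuous_ofReal.tendsto' 1 1 Complex.ofReal_one).mono_left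
        nhdsWithin_le_nhds
    · filter_upwards [self_mem_nhdsWithin] with s hs
      exact Complex.ofReal_ne_one.2 (Set.mem_Ioi.1 hs).ne'
  have hL : Tendsto (fun s : ℝ ↦ χ.LFunction s) (𝓝[>] 1) (𝓝 (χ.LFunction 1)) :=
    ((DirichletCharacter.differentiable_LFunction hχ).continuous.tendsto 1).comp
      (hofReal.mono_right nhdsWithin_le_nhds)
  have hlim := (riemannZeta_residue_one.comp hofReal).mul hL
  rw [one_mul] at hlim
  refine tendsto_nhds_unique
    ((tendsto_sub_one_mul_dedekindZeta_nhdsGT K).congr' ?_) hlim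
  filter_upwards [self_mem_nhdsWithin] with s hs
  rw [Function.comp_apply, mul_assoc, ← LSeries_zetaMul (by simpa using hs), ← h]
  exact congrArg _ (LSeries_congr (fun hn ↦ (idealCount_apply hn).symm) _)

end ZetaFactorization

section ClassNumberFormula

open NumberField

variable {p : ℕ} [Fact p.Prime] {K : Type*} [Field K] {α : K}

lemma nonempty_algEquiv_of_sq_eq_neg_prime [CharZero K] (hα : α ^ 2 = -(p : K))
    (hgen : Algebra.adjoin ℚ {α} = ⊤) {m : ℤ} (hm : (p : ℤ) + 1 = 4 * m) :
    Nonempty (QuadraticAlgebra ℤ (-m) 1 ≃ₐ[ℤ] 𝓞 K) := by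
  have hp : p.Prime := Fact.out
  have hmK : (p : K) + 1 = 4 * m := by exact_mod_cast congrArg (Int.cast : ℤ → K) hm
  have hdisc : (1 : ℤ) ^ 2 + 4 * -m = -p := by linear_combination hm
  refine nonempty_algEquiv_ringOfIntegers (θ := (1 + α) / 2) ?_ (fun r hr ↦ ?_) ?_ ?_
  · push_cast
    linear_combination hα / 4 - hmK / 4
  · have hmQ : (p : ℚ) + 1 = 4 * m := by exact_mod_cast hm
    have hp₀ : (0 : ℚ) < p := by exact_mod_cast hp.pos
    push_cast at hr
    nlinarith [sq_nonneg (2 * r - 1)]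
  · have hmem : 2 • ((1 + α) / 2) - 1 ∈ Algebra.adjoin ℚ {(1 + α) / 2} :=
      sub_mem (nsmul_mem (Algebra.self_mem_adjoin_singleton ℚ _) 2) (one_mem _)
    have hα_eq : 2 • ((1 + α) / 2) - 1 = α := by
      rw [nsmul_eq_mul]
      push_cast
      ring
    rw [hα_eq] at hmem
    rwa [← top_le_iff, ← hgen, Algebra.adjoin_le_iff, Set.singleton_subset_iff]
  · rw [hdisc]
    exact (Nat.prime_iff_prime_int.1 hp).neg.irreducible.squarefree

theorem classNumber_eq_sum_legendreSym [NumberField K] (hp : p % 4 = 3) (hp₃ : 3 < p)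
    (hα : α ^ 2 = -(p : K)) (hgen : Algebra.adjoin ℚ {α} = ⊤) :
    (classNumber K : ℚ) = -(1 / p) * ∑ k ∈ range p, (legendreSym p k : ℚ) * k := by
  obtain ⟨m, hm⟩ : ∃ m : ℤ, (p : ℤ) + 1 = 4 * m := ⟨(p + 1) / 4, by omega⟩
  obtain ⟨e⟩ := nonempty_algEquiv_of_sq_eq_neg_prime hα hgen hm
  have hresidue := dedekindZeta_residue_eq_LFunction_one (legendreChar_ne_one (by omega))
    (idealCount_eq_zetaMul hm e)
  rw [dedekindZeta_residue_eq e (by omega), LFunction_legendreChar_one hp] at hresidue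
  have hdisc : -((1 : ℤ) ^ 2 + 4 * (-m : ℤ) : ℝ) = p := by
    have hmR : (p : ℝ) + 1 = 4 * m := by exact_mod_cast hm
    push_cast
    linear_combination -hmR
  have hp₀ : (0 : ℝ) < p := by exact_mod_cast (by omega : 0 < p)
  have hfactor : (Real.pi / (√p : ℝ) : ℂ) ≠ 0 := by
    exact_mod_cast (div_pos Real.pi_pos (Real.sqrt_pos.2 hp₀)).ne'
  rw [hdisc, Complex.ofReal_mul, Complex.ofReal_div, mul_right_inj' hfactor] at hresidue
  rw [← Rat.cast_inj (α := ℂ)]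
  push_cast at hresidue ⊢
  exact hresidue

end ClassNumberFormula

section SumsOfResidues

variable {p : ℕ} [Fact p.Prime]

lemma legendreSym_eq_one_or_neg_one_of_mem_range {k : ℕ} (hk : k ∈ range p) (hk₀ : k ≠ 0) :
    legendreSym p k = 1 ∨ legendreSym p k = -1 := by
  refine legendreSym.eq_one_or_neg_one p ?_
  rw [Int.cast_natCast, Ne, ZMod.natCast_eq_zero_iff]
  exact Nat.not_dvd_of_pos_of_lt (Nat.pos_of_ne_zero hk₀) (mem_range.1 hk)

lemma sum_residues_add_sum_nonresidues {M : Type*} [AddCommMonoid M] {f : ℕ → M} (hf : f 0 = 0) :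
    (∑ k ∈ range p with legendreSym p (k : ℕ) = 1, f k) +
      ∑ k ∈ range p with legendreSym p (k : ℕ) = -1, f k =
      ∑ k ∈ range p, f k := by
  rw [sum_filter, sum_filter, ← sum_add_distrib]
  refine sum_congr rfl fun k hk ↦ ?_
  rcases eq_or_ne k 0 with rfl | hk₀
  · simp [hf]
  · rcases legendreSym_eq_one_or_neg_one_of_mem_range hk hk₀ with h | h <;> simp [h]

lemma sum_residues_sub_sum_nonresidues {R : Type*} [Ring R] (f : ℕ → R) :
    (∑ k ∈ range p with legendreSym p (k : ℕ) = 1, f k) -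
      ∑ k ∈ range p with legendreSym p (k : ℕ) = -1, f k =
      ∑ k ∈ range p, (legendreSym p k : R) * f k := by
  rw [sum_filter, sum_filter, ← sum_sub_distrib]
  refine sum_congr rfl fun k hk ↦ ?_
  rcases eq_or_ne k 0 with rfl | hk₀
  · simp
  · rcases legendreSym_eq_one_or_neg_one_of_mem_range hk hk₀ with h | h <;> simp [h]

lemma sum_range_div_self {F : Type*} [Field F] [CharZero F] {n : ℕ} (hn : n ≠ 0) :
    ∑ k ∈ range n, (k / n : F) = (n - 1) / 2 := by
  have hn' : (n : F) ≠ 0 := Nat.cast_ne_zero.2 hn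
  rw [← sum_div, div_eq_div_iff hn' two_ne_zero]
  have hsum := congrArg (Nat.cast : ℕ → F) (sum_range_id_mul_two n)
  rw [Nat.cast_mul, Nat.cast_mul, Nat.cast_sum, Nat.cast_pred (Nat.pos_of_ne_zero hn)] at hsum
  rw [mul_comm (_ - 1)]
  exact_mod_cast hsum

end SumsOfResidues

end ImaginaryQuadratic

theorem stmt_7 (p : ℕ) [Fact p.Prime] (hp5 : 5 ≤ p) (hp3 : p % 4 = 3)
    (K : Type*) [Field K] [NumberField K]
    (α : K) (hα : α ^ 2 = -(p : K)) (hgen : Algebra.adjoin ℚ {α} = ⊤) :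
    (∑ k ∈ (Finset.range p).filter (fun k : ℕ => legendreSym p (k : ℤ) = 1), (k : ℚ) / p)
        = (p - 1) / 4 - (NumberField.classNumber K : ℚ) / 2 ∧
    (∑ k ∈ (Finset.range p).filter (fun k : ℕ => legendreSym p (k : ℤ) = -1), (k : ℚ) / p)
        = (p - 1) / 4 + (NumberField.classNumber K : ℚ) / 2 := by
  have hsum := ImaginaryQuadratic.sum_residues_add_sum_nonresidues (p := p)
    (f := fun k ↦ (k / p : ℚ)) (by simp)
  have hdiff := ImaginaryQuadratic.sum_residues_sub_sum_nonresidues (p := p) (fun k ↦ (k / p : ℚ))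
  have hclass : ∑ k ∈ range p, (legendreSym p k : ℚ) * (k / p) = -NumberField.classNumber K := by
    rw [ImaginaryQuadratic.classNumber_eq_sum_legendreSym hp3 (by omega) hα hgen, neg_mul, neg_neg,
      mul_sum]
    exact sum_congr rfl fun k _ ↦ by ring
  rw [ImaginaryQuadratic.sum_range_div_self (by omega)] at hsum
  rw [hclass] at hdiff
  constructor <;> linarith
end
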